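/- arXiv:2301.02155 — 3 statements merged into one kernel-verified Lean document; each statement's English description precedes it below -/
import Mathlib

section
/- For every integer t ≥ 1, every (ᾱ, β̄) ∈ R^{(t)}_in, and every ε > 0, for all sufficiently large L there exists an (L, L(ᾱ+ε), L(ᾱ+ε), L(β̄+ε), L(β̄+ε)) ε-error (2,2) PIR code whose query distribution for message 1 is uniform on {(1,1),(2,2)} and for message 2 is uniform on {(1,2),(2,1)}. -/
open scoped BigOperators

namespace PIR

/-- Messages are length-`L` vectors over `F_2`. -/
abbrev Msg (L : ℕ) := Fin L → ZMod 2

/-- A (2,2) PIR code (without the correctness condition) with message length `L`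
and query alphabet `Q`.  The two messages are independent and uniform on `F_2^L`;
the queries are independent of the messages (built into the model: the query
distribution `P k` for desired message `k` does not depend on the messages). -/
structure CodeBase (L : ℕ) (Q : Type) [Fintype Q] [DecidableEq Q] where
  /-- query distribution for desired message index `k` -/
  P : Fin 2 → Q × Q → ℝ
  P_nonneg : ∀ k qq, 0 ≤ P k qq
  P_sum : ∀ k, ∑ qq : Q × Q, P k qq = 1
  /-- number of stored `F_2` symbols at database `n` -/
  stor : Fin 2 → ℕ
  /-- storage encoders -/
  phi : (n : Fin 2) → Msg L × Msg L → (Fin (stor n) → ZMod 2)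
  /-- answer lengths -/
  blen : Fin 2 → Q → ℕ
  /-- deterministic answer functions -/
  ans : (n : Fin 2) → (q : Q) → (Fin (stor n) → ZMod 2) → (Fin (blen n q) → ZMod 2)
  /-- decoding functions -/
  dec : (k : Fin 2) → (q₁ q₂ : Q) → (Fin (blen 0 q₁) → ZMod 2) →
      (Fin (blen 1 q₂) → ZMod 2) → Msg L
  /-- Privacy: for each database `n`, the joint distribution of
  `(Q_n^{[k]}, A_n^{[k]}, S_n)` is the same for `k = 1, 2`.  Since the answer
  `A_n` is the fixed deterministic function `ans` of `(Q_n, S_n)` (not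
  depending on `k`), this is expressed as equality of the joint distributions of
  `(Q_n, S_n)` (messages uniform, queries independent of messages). -/
  privacy : ∀ (n : Fin 2) (q : Q) (s : Fin (stor n) → ZMod 2),
    (∑ qq : Q × Q, if (if n = 0 then qq.1 else qq.2) = q then P 0 qq else 0) *
      ((Finset.univ.filter (fun w : Msg L × Msg L => phi n w = s)).card : ℝ) =
    (∑ qq : Q × Q, if (if n = 0 then qq.1 else qq.2) = q then P 1 qq else 0) *
      ((Finset.univ.filter (fun w : Msg L × Msg L => phi n w = s)).card : ℝ)

variable {L : ℕ} {Q : Type} [Fintype Q] [DecidableEq Q]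

/-- The desired message `W_k`. -/
def target (k : Fin 2) (w : Msg L × Msg L) : Msg L := if k = 0 then w.1 else w.2

/-- The decoder output `Ŵ_k` when the realized queries are `qq` and the messages `w`. -/
def retrieved (C : CodeBase L Q) (k : Fin 2) (qq : Q × Q) (w : Msg L × Msg L) : Msg L :=
  C.dec k qq.1 qq.2 (C.ans 0 qq.1 (C.phi 0 w)) (C.ans 1 qq.2 (C.phi 1 w))

/-- Zero-error correctness: `Ŵ_k = W_k` for all realizations. -/
def IsZeroError (C : CodeBase L Q) : Prop :=
  ∀ (k : Fin 2) (w : Msg L × Msg L) (qq : Q × Q), C.P k qq ≠ 0 →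
    retrieved C k qq w = target k w

/-- The average probability of error `P_e`. -/
noncomputable def Pe (C : CodeBase L Q) : ℝ :=
  (1/2) * ∑ k : Fin 2, ∑ w : Msg L × Msg L, ∑ qq : Q × Q,
    ((2:ℝ)^(2*L))⁻¹ * C.P k qq * (if retrieved C k qq w ≠ target k w then 1 else 0)

/-- The retrieval rate `β_n = E[β_n^{(Q_n)}]` (the marginal of `Q_n` is the same
for `k=1,2` by privacy; we use `k=1`, i.e. index `0`). -/
noncomputable def betaRate (C : CodeBase L Q) (n : Fin 2) : ℝ :=
  ∑ qq : Q × Q, C.P 0 qq * (C.blen n (if n = 0 then qq.1 else qq.2) : ℝ)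

/-- A linear PIR code: storage encoders and answer functions are `F_2`-linear. -/
def IsLinear (C : CodeBase L Q) : Prop :=
  (∀ n : Fin 2, IsLinearMap (ZMod 2) (C.phi n)) ∧
  (∀ (n : Fin 2) (q : Q), IsLinearMap (ZMod 2) (C.ans n q))

/-- A bundled PIR code (with its query alphabet). -/
structure Code (L : ℕ) where
  Q : Type
  [fQ : Fintype Q]
  [dQ : DecidableEq Q]
  base : CodeBase L Q

attribute [instance] Code.fQ Code.dQ

/-- A normalized storage-retrieval pair `(ᾱ, β̄)` is achievable. -/
def Achievable (ab : ℝ × ℝ) : Prop :=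
  ∀ ε > (0:ℝ), ∃ L₀ : ℕ, ∀ L ≥ L₀, ∃ C : Code L,
    IsZeroError C.base ∧
    ((C.base.stor 0 + C.base.stor 1 : ℕ) : ℝ) / 2 ≤ L * (ab.1 + ε) ∧
    (betaRate C.base 0 + betaRate C.base 1) / 2 ≤ L * (ab.2 + ε)

/-- Achievability by linear codes. -/
def LinAchievable (ab : ℝ × ℝ) : Prop :=
  ∀ ε > (0:ℝ), ∃ L₀ : ℕ, ∀ L ≥ L₀, ∃ C : Code L,
    IsZeroError C.base ∧ IsLinear C.base ∧
    ((C.base.stor 0 + C.base.stor 1 : ℕ) : ℝ) / 2 ≤ L * (ab.1 + ε) ∧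
    (betaRate C.base 0 + betaRate C.base 1) / 2 ≤ L * (ab.2 + ε)

/-- The achievable storage-retrieval rate region `R`. -/
def Region : Set (ℝ × ℝ) := { ab | Achievable ab }

/-- The query distribution used for the `(2,2)` PIR system: for message 1,
uniform on `{(1,1),(2,2)}`; for message 2, uniform on `{(1,2),(2,1)}`. -/
noncomputable def stdP : Fin 2 → Fin 2 × Fin 2 → ℝ :=
  fun k qq => if (k = 0 ∧ qq.1 = qq.2) ∨ (k = 1 ∧ qq.1 ≠ qq.2) then 1/2 else 0



/-- Probability that a random variable `X` (on finite sample space `Ω` with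
probability mass function `p`) takes the value `x`. -/
noncomputable def prOf {Ω : Type} [Fintype Ω] {γ : Type} [DecidableEq γ]
    (p : Ω → ℝ) (X : Ω → γ) (x : γ) : ℝ :=
  ∑ ω : Ω, if X ω = x then p ω else 0

/-- Shannon entropy (in bits) of the random variable `X`. -/
noncomputable def ent {Ω : Type} [Fintype Ω] {γ : Type} [Fintype γ] [DecidableEq γ]
    (p : Ω → ℝ) (X : Ω → γ) : ℝ :=
  ∑ x : γ, -(prOf p X x * Real.logb 2 (prOf p X x))

/-- Conditional entropy `H(X|Y) = H(X,Y) - H(Y)` (in bits). -/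
noncomputable def condEnt {Ω : Type} [Fintype Ω] {γ δ : Type} [Fintype γ] [DecidableEq γ]
    [Fintype δ] [DecidableEq δ] (p : Ω → ℝ) (X : Ω → γ) (Y : Ω → δ) : ℝ :=
  ent p (fun ω => (X ω, Y ω)) - ent p Y

/-- Mutual information `I(X;Y)` (in bits). -/
noncomputable def mi {Ω : Type} [Fintype Ω] {γ δ : Type} [Fintype γ] [DecidableEq γ]
    [Fintype δ] [DecidableEq δ] (p : Ω → ℝ) (X : Ω → γ) (Y : Ω → δ) : ℝ :=
  ent p X + ent p Y - ent p (fun ω => (X ω, Y ω))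

/-- Conditional mutual information `I(X;Y|Z)` (in bits). -/
noncomputable def cmi {Ω : Type} [Fintype Ω] {γ δ ε : Type} [Fintype γ] [DecidableEq γ]
    [Fintype δ] [DecidableEq δ] [Fintype ε] [DecidableEq ε]
    (p : Ω → ℝ) (X : Ω → γ) (Y : Ω → δ) (Z : Ω → ε) : ℝ :=
  ent p (fun ω => (X ω, Z ω)) + ent p (fun ω => (Y ω, Z ω))
    - ent p (fun ω => (X ω, Y ω, Z ω)) - ent p Z

/-- Joint entropy `H({U_i, i ∈ A})` of the subfamily indexed by `A`. -/
noncomputable def jEnt {Ω : Type} [Fintype Ω] {γ : Type} [Fintype γ] [DecidableEq γ]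
    {M : ℕ} (p : Ω → ℝ) (U : Fin M → Ω → γ) (A : Finset (Fin M)) : ℝ :=
  ent p (fun ω => fun i : {i // i ∈ A} => U i.1 ω)

/-- Conditional joint entropy `H({U_j, j ∈ J} | {U_j', j' ∈ B})`. -/
noncomputable def cjEnt {Ω : Type} [Fintype Ω] {γ : Type} [Fintype γ] [DecidableEq γ]
    {M : ℕ} (p : Ω → ℝ) (U : Fin M → Ω → γ) (J B : Finset (Fin M)) : ℝ :=
  jEnt p U (J ∪ B) - jEnt p U B

/-- Conditional joint entropy `H({U_i, i ∈ A} | S)`. -/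
noncomputable def jEntCondS {Ω : Type} [Fintype Ω] {γ τ : Type} [Fintype γ] [DecidableEq γ]
    [Fintype τ] [DecidableEq τ] {M : ℕ}
    (p : Ω → ℝ) (U : Fin M → Ω → γ) (A : Finset (Fin M)) (S : Ω → τ) : ℝ :=
  ent p (fun ω => ((fun i : {i // i ∈ A} => U i.1 ω), S ω)) - ent p S

/-- The binned multiple-description region `R*_MD((S,U_1,…,U_M), ({U_j, j∈A}, A ∈ recs))`:
the rate vectors `(R, R')` with `0 ≤ R_i ≤ R'_i`,
`Σ_{i∈A} R'_i ≥ Σ_{i∈A} H(U_i) − H({U_i,i∈A}|S)` for every `A ⊆ {1,…,M}`, and for every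
reconstruction set `B ∈ recs` and every `J ⊆ B`,
`Σ_{j∈J}(R'_j − R_j) ≤ Σ_{j∈J} H(U_j) − H({U_j,j∈J} | {U_{j'}, j' ∈ B \ J})`. -/
def RstarMD {Ω γ τ : Type} [Fintype Ω] [Fintype γ] [DecidableEq γ] [Fintype τ] [DecidableEq τ]
    {M : ℕ} (p : Ω → ℝ) (S : Ω → τ) (U : Fin M → Ω → γ)
    (recs : Finset (Finset (Fin M))) (R R' : Fin M → ℝ) : Prop :=
  (∀ i, 0 ≤ R i ∧ R i ≤ R' i) ∧
  (∀ A : Finset (Fin M), (∑ i ∈ A, ent p (U i)) - jEntCondS p U A S ≤ ∑ i ∈ A, R' i) ∧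
  (∀ B ∈ recs, ∀ J ⊆ B,
    ∑ j ∈ J, (R' j - R j) ≤ (∑ j ∈ J, ent p (U j)) - cjEnt p U J (B \ J))

/-- Random variables `(X0,X1,X2,Y1,Y2)` (indexed `0,…,4`) jointly distributed with the pair
of messages `(V1,V2)` which is uniform on `F_2^t × F_2^t`. -/
structure RVSetup (t : ℕ) where
  Ω : Type
  [fΩ : Fintype Ω]
  p : Ω → ℝ
  p_nonneg : ∀ ω, 0 ≤ p ω
  p_sum : ∑ ω : Ω, p ω = 1
  γ : Type
  [fγ : Fintype γ]
  [dγ : DecidableEq γ]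
  V : Ω → Msg t × Msg t
  X : Fin 5 → Ω → γ
  V_unif : ∀ v : Msg t × Msg t, prOf p V v = ((2:ℝ)^(2*t))⁻¹

attribute [instance] RVSetup.fΩ RVSetup.fγ RVSetup.dγ

/-- The four reconstruction sets `{X0,X1,Y1},{X0,X1,Y2},{X0,X2,Y1},{X0,X2,Y2}` with the
indexing `0 ↦ X0, 1 ↦ X1, 2 ↦ X2, 3 ↦ Y1, 4 ↦ Y2`. -/
def recs5 : Finset (Finset (Fin 5)) := {{0,1,3}, {0,1,4}, {0,2,3}, {0,2,4}}

/-- The inner-bound region `R^{(t)}_in`. -/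
def RinMem (t : ℕ) (ab : ℝ × ℝ) : Prop :=
  ∃ S : RVSetup t,
    -- (1) decodability of V1 and V2 from the prescribed triples
    (∃ (f11 f12 f21 f22 : S.γ × S.γ × S.γ → Msg t),
      ∀ ω, S.p ω ≠ 0 →
        (S.V ω).1 = f11 (S.X 0 ω, S.X 1 ω, S.X 3 ω) ∧
        (S.V ω).1 = f22 (S.X 0 ω, S.X 2 ω, S.X 4 ω) ∧
        (S.V ω).2 = f12 (S.X 0 ω, S.X 1 ω, S.X 4 ω) ∧
        (S.V ω).2 = f21 (S.X 0 ω, S.X 2 ω, S.X 3 ω)) ∧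
    -- (2),(3),(4): existence of rates
    (∃ β γr : Fin 5 → ℝ,
      RstarMD S.p S.V S.X recs5 β γr ∧
      ∃ α : Fin 5 → ℝ,
        (∀ i, 0 ≤ α i ∧ α i ≤ β i) ∧
        ((γr 0 - β 0) + (γr 1 - β 1) + (γr 2 - β 2) <
            ent S.p (S.X 0) + ent S.p (S.X 1) + ent S.p (S.X 2)
              - jEnt S.p S.X {0,1,2} →
          RstarMD S.p S.V ![S.X 0, S.X 1, S.X 2] {(Finset.univ : Finset (Fin 3))}
            ![α 0, α 1, α 2] ![γr 0, γr 1, γr 2]) ∧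
        (¬ ((γr 0 - β 0) + (γr 1 - β 1) + (γr 2 - β 2) <
            ent S.p (S.X 0) + ent S.p (S.X 1) + ent S.p (S.X 2)
              - jEnt S.p S.X {0,1,2}) →
          α 0 = β 0 ∧ α 1 = β 1 ∧ α 2 = β 2) ∧
        ((γr 3 - β 3) + (γr 4 - β 4) < mi S.p (S.X 3) (S.X 4) →
          RstarMD S.p S.V ![S.X 3, S.X 4] {(Finset.univ : Finset (Fin 2))}
            ![α 3, α 4] ![γr 3, γr 4]) ∧
        (¬ ((γr 3 - β 3) + (γr 4 - β 4) < mi S.p (S.X 3) (S.X 4)) →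
          α 3 = β 3 ∧ α 4 = β 4) ∧
        2 * t * ab.1 ≥ α 0 + α 1 + α 2 + α 3 + α 4 ∧
        4 * t * ab.2 ≥ 2 * β 0 + β 1 + β 2 + β 3 + β 4)

/-! ### Random hash functions -/

section Hash

set_option linter.unusedSectionVars false

/-- Average over all functions `W → Z`. -/
noncomputable def hE1 {W Z : Type} [Fintype W] [DecidableEq W] [Fintype Z]
    (ψ : (W → Z) → ℝ) : ℝ :=
  ∑ g : W → Z, (∏ _w : W, ((Fintype.card Z : ℝ))⁻¹) * ψ g

/-- Average over all families of functions `W → Z k`. -/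
noncomputable def hE {κ W : Type} {Z : κ → Type} [Fintype κ] [DecidableEq κ] [Fintype W]
    [DecidableEq W] [∀ k, Fintype (Z k)] (φ : (∀ k, W → Z k) → ℝ) : ℝ :=
  ∑ h : (∀ k, W → Z k), (∏ k, ∏ _w : W, ((Fintype.card (Z k) : ℝ))⁻¹) * φ h

lemma hE1_prod {W Z : Type} [Fintype W] [DecidableEq W] [Fintype Z]
    (φ : W → Z → ℝ) :
    hE1 (fun g => ∏ w, φ w (g w)) = ∏ w, ∑ z, ((Fintype.card Z : ℝ))⁻¹ * φ w z := by
  rw [Finset.prod_univ_sum, Fintype.piFinset_univ, hE1]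
  exact Finset.sum_congr rfl fun g _ => Finset.prod_mul_distrib.symm

lemma hE_prod {κ W : Type} {Z : κ → Type} [Fintype κ] [DecidableEq κ] [Fintype W]
    [DecidableEq W] [∀ k, Fintype (Z k)] (ψ : ∀ k, (W → Z k) → ℝ) :
    hE (fun h : (∀ k, W → Z k) => ∏ k, ψ k (h k)) = ∏ k, hE1 (ψ k) := by
  simp only [hE1]
  rw [Finset.prod_univ_sum, Fintype.piFinset_univ, hE]
  exact Finset.sum_congr rfl fun g _ => Finset.prod_mul_distrib.symm

lemma hE1_one {W Z : Type} [Fintype W] [DecidableEq W] [Fintype Z] [Nonempty Z] :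
    hE1 (fun _ : W → Z => (1:ℝ)) = 1 := by
  have := hE1_prod (W := W) (Z := Z) (fun _ _ => 1)
  simpa using this

lemma hE1_pair {W Z : Type} [Fintype W] [DecidableEq W] [Fintype Z] [Nonempty Z] [DecidableEq Z]
    (x y : W) (a : Z) :
    hE1 (fun g : W → Z => if g x = a ∧ g y = a then (1:ℝ) else 0) =
      if x = y then ((Fintype.card Z : ℝ))⁻¹ else ((Fintype.card Z : ℝ))⁻¹ ^ 2 := by
  have h := hE1_prod (W := W) (Z := Z)
    (fun w z => if w = x ∨ w = y then (if z = a then 1 else 0) else 1)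
  have e : (fun g : W → Z => if g x = a ∧ g y = a then (1:ℝ) else 0) =
      fun g => ∏ w, (if w = x ∨ w = y then (if g w = a then 1 else 0) else 1) := by
    funext g
    split_ifs with hg
    · symm
      apply Finset.prod_eq_one
      rintro w -
      split_ifs with h1 h2
      · rfl
      · rcases h1 with rfl | rfl <;> simp_all
      · rfl
    · symm
      rw [not_and_or] at hg
      rcases hg with hg | hg
      · exact Finset.prod_eq_zero (Finset.mem_univ x) (by simp [hg])
      · exact Finset.prod_eq_zero (Finset.mem_univ y) (by simp [hg])
  have key : ∀ w : W, (∑ z : Z, ((Fintype.card Z : ℝ))⁻¹ *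
      (if w = x ∨ w = y then (if z = a then (1:ℝ) else 0) else 1)) =
      if w ∈ ({x, y} : Finset W) then ((Fintype.card Z : ℝ))⁻¹ else 1 := by
    intro w
    by_cases hw : w = x ∨ w = y <;> simp [hw]
  rw [e, h, Finset.prod_congr rfl (fun w _ => key w), Finset.prod_ite_mem, Finset.univ_inter,
    Finset.prod_const]
  split_ifs with hxy
  · simp [hxy]
  · rw [Finset.card_pair hxy]

lemma hE1_coll {W Z : Type} [Fintype W] [DecidableEq W] [Fintype Z] [Nonempty Z] [DecidableEq Z]
    (x y : W) (hxy : x ≠ y) :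
    hE1 (fun g : W → Z => if g x = g y then (1:ℝ) else 0) = ((Fintype.card Z : ℝ))⁻¹ := by
  have e : (fun g : W → Z => if g x = g y then (1:ℝ) else 0) =
      fun g => ∑ a : Z, if g x = a ∧ g y = a then (1:ℝ) else 0 := by
    funext g
    simp only [ite_and]
    simp [eq_comm]
  have h2 : hE1 (fun g : W → Z => ∑ a : Z, if g x = a ∧ g y = a then (1:ℝ) else 0) =
      ∑ a : Z, hE1 (fun g : W → Z => if g x = a ∧ g y = a then (1:ℝ) else 0) := by
    simp only [hE1, Finset.mul_sum]
    rw [Finset.sum_comm]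
  rw [e, h2]
  simp only [hE1_pair, hxy, if_false]
  have : (Fintype.card Z : ℝ) ≠ 0 := by simp
  simp
  field_simp

variable {κ W : Type} {Z : κ → Type} [Fintype κ] [DecidableEq κ] [Fintype W]
    [DecidableEq W] [∀ k, Fintype (Z k)] [∀ k, Nonempty (Z k)] [∀ k, DecidableEq (Z k)]

lemma hE_prodK (K : Finset κ) (P : ∀ k, (W → Z k) → Prop) [∀ k, DecidablePred (P k)]
    (c : κ → ℝ) (hc : ∀ k ∈ K, hE1 (fun g => if P k g then (1:ℝ) else 0) = c k) :
    hE (fun h : (∀ k, W → Z k) => if ∀ k ∈ K, P k (h k) then (1:ℝ) else 0) = ∏ k ∈ K, c k := by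
  have e : (fun h : (∀ k, W → Z k) => if ∀ k ∈ K, P k (h k) then (1:ℝ) else 0) =
      fun h => ∏ k, (if k ∈ K then (if P k (h k) then (1:ℝ) else 0) else 1) := by
    funext h
    rw [Finset.prod_ite_mem, Finset.univ_inter]
    split_ifs with hh
    · symm
      exact Finset.prod_eq_one fun k hk => by simp [hh k hk]
    · push Not at hh
      obtain ⟨k, hk, hk2⟩ := hh
      symm
      exact Finset.prod_eq_zero hk (by simp [hk2])
  rw [e, hE_prod (fun k g => if k ∈ K then (if P k g then (1:ℝ) else 0) else 1)]
  have : ∀ k, hE1 (fun g : W → Z k => if k ∈ K then (if P k g then (1:ℝ) else 0) else 1) =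
      if k ∈ K then c k else 1 := by
    intro k
    by_cases hk : k ∈ K
    · simp only [hk, if_true]; exact hc k hk
    · simp only [hk, if_false]; exact hE1_one
  rw [Finset.prod_congr rfl (fun k _ => this k), Finset.prod_ite_mem, Finset.univ_inter]

lemma hE_pair (x y : κ → W) (f : ∀ k, Z k) :
    hE (fun h : (∀ k, W → Z k) =>
      if ∀ k, h k (x k) = f k ∧ h k (y k) = f k then (1:ℝ) else 0) =
      ∏ k, if x k = y k then ((Fintype.card (Z k) : ℝ))⁻¹
        else ((Fintype.card (Z k) : ℝ))⁻¹ ^ 2 := by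
  have := hE_prodK Finset.univ (fun k (g : W → Z k) => g (x k) = f k ∧ g (y k) = f k) _
    (fun k _ => hE1_pair (x k) (y k) (f k))
  simpa using this

lemma hE_coll (K : Finset κ) (x y : κ → W) (hxy : ∀ k ∈ K, x k ≠ y k) :
    hE (fun h : (∀ k, W → Z k) =>
      if ∀ k ∈ K, h k (x k) = h k (y k) then (1:ℝ) else 0) =
      ∏ k ∈ K, ((Fintype.card (Z k) : ℝ))⁻¹ :=
  hE_prodK K (fun k (g : W → Z k) => g (x k) = g (y k)) _
    (fun k hk => hE1_coll (x k) (y k) (hxy k hk))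

lemma hE_one : hE (fun _ : (∀ k, W → Z k) => (1:ℝ)) = 1 := by
  classical
  have := hE_prod (Z := Z) (W := W) (fun _ _ => 1)
  simp only [Finset.prod_const_one] at this
  rw [this]
  exact Finset.prod_eq_one fun k _ => hE1_one

lemma hE_sum {α : Type} (s : Finset α) (φ : α → (∀ k, W → Z k) → ℝ) :
    hE (fun h => ∑ a ∈ s, φ a h) = ∑ a ∈ s, hE (φ a) := by
  simp only [hE, Finset.mul_sum]
  rw [Finset.sum_comm]

lemma hE_mul (c : ℝ) (φ : (∀ k, W → Z k) → ℝ) :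
    hE (fun h => c * φ h) = c * hE φ := by
  simp only [hE, Finset.mul_sum]
  exact Finset.sum_congr rfl fun _ _ => by ring

lemma hE_add (φ ψ : (∀ k, W → Z k) → ℝ) :
    hE (fun h => φ h + ψ h) = hE φ + hE ψ := by
  simp only [hE, mul_add, Finset.sum_add_distrib]

lemma hE_mono (φ ψ : (∀ k, W → Z k) → ℝ) (h : ∀ x, φ x ≤ ψ x) : hE φ ≤ hE ψ := by
  apply Finset.sum_le_sum
  intro x _
  exact mul_le_mul_of_nonneg_left (h x) (by positivity)

lemma hE_const (c : ℝ) : hE (fun _ : (∀ k, W → Z k) => c) = c := by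
  have := hE_mul (Z := Z) (W := W) c (fun _ => 1)
  rw [hE_one] at this
  simpa using this

lemma hE_exists (φ : (∀ k, W → Z k) → ℝ) : ∃ h, φ h ≤ hE φ := by
  by_contra! hc
  have hw : (0:ℝ) < ∏ k, ∏ _w : W, ((Fintype.card (Z k) : ℝ))⁻¹ := by positivity
  have h1 : hE φ < hE φ := by
    calc hE φ = hE φ * hE (fun _ : (∀ k, W → Z k) => (1:ℝ)) := by rw [hE_one, mul_one]
      _ = hE (fun _ : (∀ k, W → Z k) => hE φ) := by
        rw [← hE_mul]; simp
      _ < hE φ := by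
        refine Finset.sum_lt_sum_of_nonempty Finset.univ_nonempty ?_
        intro x _
        exact mul_lt_mul_of_pos_left (hc x) hw
  exact lt_irrefl _ h1

end Hash


/-! ### One-shot output statistics of random binning -/

section OneShot

set_option linter.unusedSectionVars false

variable {Ω W σ ι : Type} [Fintype Ω] [Fintype W] [DecidableEq W] [Fintype σ] [DecidableEq σ]
  [Fintype ι] [DecidableEq ι]

/-- Marginal probability that the subfamily `A` of `U` agrees with `v`. -/
noncomputable def qM (p : Ω → ℝ) (U : ι → Ω → W) (A : Finset ι) (v : ι → W) : ℝ :=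
  ∑ ω, if ∀ i ∈ A, U i ω = v i then p ω else 0

/-- Marginal probability that the subfamily `A` of `U` agrees with `v` and `S = s`. -/
noncomputable def qMS (p : Ω → ℝ) (U : ι → Ω → W) (S : Ω → σ) (A : Finset ι) (v : ι → W)
    (s : σ) : ℝ :=
  ∑ ω, if (∀ i ∈ A, U i ω = v i) ∧ S ω = s then p ω else 0

lemma prod_agree_le (c : ι → ℝ) (hc : ∀ j, 0 < c j) (R : Finset ι) (hR : ∀ j ∉ R, c j = 1)
    (u v : ι → W) :
    (∏ j, if u j = v j then c j else c j ^ 2) ≤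
      (∏ j, c j) ^ 2 * (1 + ∑ A ∈ R.powerset.filter (fun A => A.Nonempty),
        (∏ j ∈ A, (c j)⁻¹) * (if ∀ i ∈ A, v i = u i then 1 else 0)) := by
  set E : Finset ι := R.filter (fun j => v j = u j) with hE
  have h1 : (∏ j, if u j = v j then c j else c j ^ 2) = (∏ j, c j) ^ 2 * ∏ j ∈ E, (c j)⁻¹ := by
    have : ∏ j ∈ E, (c j)⁻¹ = ∏ j, if j ∈ E then (c j)⁻¹ else 1 := by
      rw [Finset.prod_ite_mem, Finset.univ_inter]
    rw [this, ← Finset.prod_pow, ← Finset.prod_mul_distrib]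
    apply Finset.prod_congr rfl
    intro j _
    have := (hc j).ne'
    by_cases h : u j = v j
    · by_cases hj : j ∈ R
      · simp only [hE, Finset.mem_filter, h, hj, if_true, and_true]; field_simp
      · simp [hE, h, hj, hR j hj]
    · have h' : ¬ v j = u j := fun e => h e.symm
      simp [hE, h, h']
  rw [h1]
  apply mul_le_mul_of_nonneg_left _ (by positivity)
  have hnn : ∀ A ∈ R.powerset.filter (fun A => A.Nonempty),
      0 ≤ (∏ j ∈ A, (c j)⁻¹) * (if ∀ i ∈ A, v i = u i then (1:ℝ) else 0) := by
    intro A _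
    apply mul_nonneg
    · exact Finset.prod_nonneg fun j _ => (inv_pos.2 (hc j)).le
    · split_ifs <;> norm_num
  by_cases hne : E.Nonempty
  · have hm : E ∈ R.powerset.filter (fun A => A.Nonempty) := by
      simp only [Finset.mem_filter, Finset.mem_powerset]
      exact ⟨Finset.filter_subset _ _, hne⟩
    have := Finset.single_le_sum hnn hm
    rw [if_pos (by intro i hi; exact (Finset.mem_filter.1 hi).2), mul_one] at this
    linarith
  · rw [Finset.not_nonempty_iff_eq_empty] at hne
    rw [hne, Finset.prod_empty]
    have := Finset.sum_nonneg hnn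
    linarith

variable {Zr : ι → Type} [∀ k, Fintype (Zr k)] [∀ k, Nonempty (Zr k)] [∀ k, DecidableEq (Zr k)]

lemma hE_first (u : ι → W) (f : ∀ k, Zr k) :
    hE (fun h : (∀ k, W → Zr k) => if ∀ j, h j (u j) = f j then (1:ℝ) else 0) =
      ∏ j, ((Fintype.card (Zr j) : ℝ))⁻¹ := by
  have := hE_pair (Z := Zr) u u f
  simpa using this

lemma osrb_fixed (p : Ω → ℝ) (hp : ∀ ω, 0 ≤ p ω) (U : ι → Ω → W) (S : Ω → σ)
    (R : Finset ι) (hR : ∀ j ∉ R, Fintype.card (Zr j) = 1) (Ty : Finset Ω)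
    (τ : Finset ι → ℝ) (hτ0 : ∀ A, 0 ≤ τ A) (qs : σ → ℝ)
    (hqs : ∀ s, qs s = ∑ ω, if S ω = s then p ω else 0) (hS : ∀ s, 0 < qs s)
    (hτ : ∀ ω ∈ Ty, ∀ A ⊆ R, A.Nonempty →
      qMS p U S A (fun i => U i ω) (S ω) ≤ qs (S ω) * τ A)
    (η : ℝ) (hη : 0 < η) (s : σ) (f : ∀ k, Zr k) :
    hE (fun h : (∀ k, W → Zr k) =>
      |(∏ j, ((Fintype.card (Zr j) : ℝ))⁻¹) * (∑ ω ∈ Ty, if S ω = s then p ω else 0) -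
        ∑ ω ∈ Ty, (if S ω = s then p ω else 0) *
          (if ∀ j, h j (U j ω) = f j then (1:ℝ) else 0)|) ≤
      (∏ j, ((Fintype.card (Zr j) : ℝ))⁻¹) * qs s *
        (((∑ A ∈ R.powerset.filter (fun A => A.Nonempty),
          (∏ j ∈ A, (Fintype.card (Zr j) : ℝ)) * τ A) / η + η) / 2) := by
  set c : ι → ℝ := fun j => ((Fintype.card (Zr j) : ℝ))⁻¹ with hc
  have hcpos : ∀ j, 0 < c j := fun j => by simp only [hc]; positivity
  set κ : ℝ := ∏ j, c j with hκ
  have hκpos : 0 < κ := Finset.prod_pos fun j _ => hcpos j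
  set a : Ω → ℝ := fun ω => if S ω = s then p ω else 0 with ha
  have ha0 : ∀ ω, 0 ≤ a ω := by
    intro ω; simp only [ha]; split_ifs; exacts [hp ω, le_rfl]
  set M : ℝ := ∑ ω ∈ Ty, a ω with hM
  have hM0 : 0 ≤ M := Finset.sum_nonneg fun ω _ => ha0 ω
  have hMq : M ≤ qs s := by
    rw [hqs]; exact Finset.sum_le_sum_of_subset_of_nonneg (Finset.subset_univ _)
      (fun ω _ _ => ha0 ω)
  set ind : (∀ k, W → Zr k) → Ω → ℝ :=
    fun h ω => if ∀ j, h j (U j ω) = f j then (1:ℝ) else 0 with hind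
  set X : (∀ k, W → Zr k) → ℝ := fun h => ∑ ω ∈ Ty, a ω * ind h ω with hX
  set V : ℝ := ∑ A ∈ R.powerset.filter (fun A => A.Nonempty),
          (∏ j ∈ A, (Fintype.card (Zr j) : ℝ)) * τ A with hV
  have hEX : hE X = κ * M := by
    simp only [hX]
    rw [hE_sum, hM, Finset.mul_sum]
    apply Finset.sum_congr rfl
    intro ω _
    rw [hE_mul]
    simp only [hind]
    rw [hE_first (fun j => U j ω) f, mul_comm]
  have hEX2 : hE (fun h => X h ^ 2) ≤ κ ^ 2 * (M ^ 2 + qs s ^ 2 * V) := by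
    have e1 : (fun h => X h ^ 2) = fun h => ∑ ω ∈ Ty, ∑ ω' ∈ Ty, (a ω * a ω') *
        (if ∀ j, h j (U j ω) = f j ∧ h j (U j ω') = f j then (1:ℝ) else 0) := by
      funext h
      simp only [hX]
      rw [pow_two, Finset.sum_mul_sum]
      refine Finset.sum_congr rfl fun ω _ => Finset.sum_congr rfl fun ω' _ => ?_
      have : (if ∀ j, h j (U j ω) = f j ∧ h j (U j ω') = f j then (1:ℝ) else 0) =
          ind h ω * ind h ω' := by
        simp only [hind, forall_and]
        rw [ite_and]
        split_ifs <;> simp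
      rw [this]; ring
    rw [e1, hE_sum]
    calc ∑ ω ∈ Ty, hE (fun h : (∀ k, W → Zr k) => ∑ ω' ∈ Ty, (a ω * a ω') *
          (if ∀ j, h j (U j ω) = f j ∧ h j (U j ω') = f j then (1:ℝ) else 0))
        = ∑ ω ∈ Ty, ∑ ω' ∈ Ty, (a ω * a ω') *
            (∏ j, if U j ω = U j ω' then c j else c j ^ 2) := by
          refine Finset.sum_congr rfl fun ω _ => ?_
          rw [hE_sum]
          refine Finset.sum_congr rfl fun ω' _ => ?_
          rw [hE_mul, hE_pair (fun j => U j ω) (fun j => U j ω') f]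
      _ ≤ ∑ ω ∈ Ty, ∑ ω' ∈ Ty, (a ω * a ω') * (κ ^ 2 *
            (1 + ∑ A ∈ R.powerset.filter (fun A => A.Nonempty),
              (∏ j ∈ A, (c j)⁻¹) * (if ∀ i ∈ A, U i ω' = U i ω then 1 else 0))) := by
          refine Finset.sum_le_sum fun ω _ => Finset.sum_le_sum fun ω' _ => ?_
          apply mul_le_mul_of_nonneg_left _ (mul_nonneg (ha0 _) (ha0 _))
          apply prod_agree_le c hcpos R _ (fun i => U i ω) (fun i => U i ω')
          intro j hj
          simp [hc, hR j hj]
      _ = κ ^ 2 * (M ^ 2 + ∑ A ∈ R.powerset.filter (fun A => A.Nonempty),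
            (∏ j ∈ A, (c j)⁻¹) * ∑ ω ∈ Ty, a ω * ∑ ω' ∈ Ty,
              (if ∀ i ∈ A, U i ω' = U i ω then a ω' else 0)) := by
          have e2 : ∑ A ∈ R.powerset.filter (fun A => A.Nonempty),
            (∏ j ∈ A, (c j)⁻¹) * ∑ ω ∈ Ty, a ω * ∑ ω' ∈ Ty,
              (if ∀ i ∈ A, U i ω' = U i ω then a ω' else 0) =
              ∑ ω ∈ Ty, ∑ ω' ∈ Ty, ∑ A ∈ R.powerset.filter (fun A => A.Nonempty),
              (a ω * a ω') * ((∏ j ∈ A, (c j)⁻¹) *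
                (if ∀ i ∈ A, U i ω' = U i ω then 1 else 0)) := by
            simp only [Finset.mul_sum]
            rw [Finset.sum_comm]
            refine Finset.sum_congr rfl fun ω _ => ?_
            rw [Finset.sum_comm]
            refine Finset.sum_congr rfl fun ω' _ => Finset.sum_congr rfl fun A _ => ?_
            split_ifs <;> ring
          rw [e2, hM, pow_two (∑ ω ∈ Ty, a ω), Finset.sum_mul_sum, ← Finset.sum_add_distrib,
            Finset.mul_sum]
          refine Finset.sum_congr rfl fun ω _ => ?_
          rw [← Finset.sum_add_distrib, Finset.mul_sum]
          refine Finset.sum_congr rfl fun ω' _ => ?_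
          rw [← Finset.mul_sum]; ring
      _ ≤ κ ^ 2 * (M ^ 2 + qs s ^ 2 * V) := by
          apply mul_le_mul_of_nonneg_left _ (by positivity)
          refine add_le_add le_rfl ?_
          rw [hV, Finset.mul_sum]
          apply Finset.sum_le_sum
          intro A hA
          simp only [Finset.mem_filter, Finset.mem_powerset] at hA
          have e3 : (∏ j ∈ A, (c j)⁻¹) = ∏ j ∈ A, (Fintype.card (Zr j) : ℝ) := by
            simp [hc]
          rw [e3]
          have hpos : 0 ≤ ∏ j ∈ A, (Fintype.card (Zr j) : ℝ) := by positivity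
          have : ∑ ω ∈ Ty, a ω * ∑ ω' ∈ Ty, (if ∀ i ∈ A, U i ω' = U i ω then a ω' else 0) ≤
              qs s * (qs s * τ A) := by
            calc _ ≤ ∑ ω ∈ Ty, a ω * (qs s * τ A) := by
                  apply Finset.sum_le_sum
                  intro ω hω
                  by_cases hs : S ω = s
                  · apply mul_le_mul_of_nonneg_left _ (ha0 ω)
                    have h1 := hτ ω hω A hA.1 hA.2
                    rw [hs] at h1
                    refine le_trans ?_ h1
                    rw [qMS]
                    calc _ ≤ ∑ ω', (if ∀ i ∈ A, U i ω' = U i ω then a ω' else 0) := by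
                          apply Finset.sum_le_sum_of_subset_of_nonneg (Finset.subset_univ _)
                          intro ω' _ _
                          split_ifs; exacts [ha0 _, le_rfl]
                      _ = _ := by
                          refine Finset.sum_congr rfl fun ω' _ => ?_
                          rw [ite_and]
                  · simp [ha, hs]
              _ = M * (qs s * τ A) := by rw [hM, Finset.sum_mul]
              _ ≤ qs s * (qs s * τ A) :=
                  mul_le_mul_of_nonneg_right hMq (mul_nonneg (hS s).le (hτ0 A))
          calc _ ≤ (∏ j ∈ A, (Fintype.card (Zr j) : ℝ)) * (qs s * (qs s * τ A)) :=
                mul_le_mul_of_nonneg_left this hpos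
            _ = _ := by ring
  set d : ℝ := κ * qs s * η with hd
  have hdpos : 0 < d := mul_pos (mul_pos hκpos (hS s)) hη
  have hamgm : ∀ x : ℝ, |x| ≤ (2 * d)⁻¹ * x ^ 2 + d / 2 := by
    intro x
    have h1 : 0 ≤ (2 * d)⁻¹ * (|x| - d) ^ 2 := by positivity
    have h2 : (2 * d)⁻¹ * (|x| - d) ^ 2 = (2 * d)⁻¹ * x ^ 2 + d / 2 - |x| := by
      rw [sub_sq, sq_abs]; field_simp; ring
    linarith
  calc hE (fun h => |κ * M - X h|)
      ≤ hE (fun h => (2 * d)⁻¹ * X h ^ 2 + ((-((2*d)⁻¹ * (2 * κ * M))) * X h +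
          ((2*d)⁻¹ * (κ * M) ^ 2 + d / 2) * 1)) := by
        apply hE_mono
        intro h
        refine (hamgm _).trans (le_of_eq ?_)
        ring
    _ = (2 * d)⁻¹ * hE (fun h => X h ^ 2) + ((-((2*d)⁻¹ * (2 * κ * M))) * (κ * M) +
          ((2*d)⁻¹ * (κ * M) ^ 2 + d / 2)) := by
        rw [hE_add, hE_mul, hE_add, hE_mul, hE_mul, hEX, hE_one, mul_one]
    _ ≤ (2 * d)⁻¹ * (κ ^ 2 * (M ^ 2 + qs s ^ 2 * V)) + ((-((2*d)⁻¹ * (2 * κ * M))) * (κ * M) +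
          ((2*d)⁻¹ * (κ * M) ^ 2 + d / 2)) := by
        refine add_le_add ?_ le_rfl
        exact mul_le_mul_of_nonneg_left hEX2 (by positivity)
    _ = _ := by
        have := (hS s).ne'
        rw [hd]; field_simp; ring
end OneShot


/-! ### One-shot Slepian–Wolf bound and the one-shot coding theorem -/

section OneShot2

set_option linter.unusedSectionVars false

variable {Ω W σ ι : Type} [Fintype Ω] [Fintype W] [DecidableEq W] [Fintype σ] [DecidableEq σ]
  [Fintype ι] [DecidableEq ι]
variable {Zr : ι → Type} [∀ k, Fintype (Zr k)] [∀ k, Nonempty (Zr k)] [∀ k, DecidableEq (Zr k)]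
variable {Zb : Fin 2 × ι → Type} [∀ k, Fintype (Zb k)] [∀ k, Nonempty (Zb k)]
  [∀ k, DecidableEq (Zb k)]

/-- `u` is confusable with another tuple for the task `T`. -/
def Conf (D : Finset ι → (ι → W) → Prop) (hF : ∀ k, W → Zr k) (hB : ∀ k, W → Zb k)
    (T : Finset ι × Fin 2) (u : ι → W) : Prop :=
  ∃ v : ι → W, D T.1 v ∧
    (∀ j ∈ T.1, hF j (v j) = hF j (u j) ∧ hB (T.2, j) (v j) = hB (T.2, j) (u j)) ∧
    ∃ j ∈ T.1, v j ≠ u j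

open Classical in
lemma sw_fixed (D : Finset ι → (ι → W) → Prop)
    (hDB : ∀ B u v, (∀ j ∈ B, u j = v j) → D B u → D B v)
    (N : Finset ι → ℝ) (T : Finset ι × Fin 2) (u : ι → W)
    (hN : ∀ J ⊆ T.1, J.Nonempty →
      ((Finset.univ.filter (fun v : ι → W => (∀ j ∉ J, v j = u j) ∧ D T.1 v)).card : ℝ) ≤ N J) :
    hE (fun hF : (∀ k, W → Zr k) => hE (fun hB : (∀ k, W → Zb k) =>
      if Conf D hF hB T u then (1:ℝ) else 0)) ≤
      ∑ J ∈ T.1.powerset.filter (fun A => A.Nonempty), N J *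
        ∏ j ∈ J, (((Fintype.card (Zr j) : ℝ))⁻¹ * ((Fintype.card (Zb (T.2, j)) : ℝ))⁻¹) := by
  obtain ⟨B, c⟩ := T
  simp only at *
  set C : Finset ι → Finset (ι → W) := fun J =>
    Finset.univ.filter (fun v : ι → W => ((∀ j ∉ J, v j = u j) ∧ D B v) ∧ ∀ j ∈ J, v j ≠ u j)
    with hC
  let K : Finset ι → Finset (Fin 2 × ι) := fun J => {c} ×ˢ J
  have hpt : ∀ (hF : ∀ k, W → Zr k) (hB : ∀ k, W → Zb k),
      (if Conf D hF hB (B, c) u then (1:ℝ) else 0) ≤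
      ∑ J ∈ B.powerset.filter (fun A => A.Nonempty), ∑ v ∈ C J,
        (if ∀ j ∈ J, hF j (v j) = hF j (u j) then (1:ℝ) else 0) *
        (if ∀ k ∈ K J, hB k (v k.2) = hB k (u k.2) then (1:ℝ) else 0) := by
    intro hF hB
    have hnn : ∀ (J : Finset ι) (v : ι → W), (0:ℝ) ≤ (if ∀ j ∈ J, hF j (v j) = hF j (u j) then (1:ℝ) else 0) *
        (if ∀ k ∈ K J, hB k (v k.2) = hB k (u k.2) then (1:ℝ) else 0) := by
      intro J v
      split_ifs <;> norm_num
    split_ifs with hcf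
    · obtain ⟨v, hv, hh, j0, hj0, hne⟩ := hcf
      simp only at hv hh hj0
      set J : Finset ι := B.filter (fun j => v j ≠ u j) with hJ
      set v' : ι → W := fun j => if j ∈ J then v j else u j with hv'
      have hJB : J ⊆ B := Finset.filter_subset _ _
      have hJm : J ∈ B.powerset.filter (fun A => A.Nonempty) := by
        simp only [Finset.mem_filter, Finset.mem_powerset]
        exact ⟨hJB, j0, by simp [hJ, hj0, hne]⟩
      have hvJ : ∀ j ∈ J, v' j = v j := fun j hj => by simp [hv', hj]
      have hv'm : v' ∈ C J := by
        simp only [hC, Finset.mem_filter, Finset.mem_univ, true_and]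
        refine ⟨⟨fun j hj => by simp [hv', hj], ?_⟩, ?_⟩
        · apply hDB B v v' _ hv
          intro j hj
          by_cases hjJ : j ∈ J
          · simp [hv', hjJ]
          · have : v j = u j := by
              by_contra hcon
              exact hjJ (by simp [hJ, hj, hcon])
            simp [hv', hjJ, this]
        · intro j hj
          rw [hvJ j hj]
          exact (Finset.mem_filter.1 hj).2
      have h1 : (1:ℝ) = (if ∀ j ∈ J, hF j (v' j) = hF j (u j) then (1:ℝ) else 0) *
          (if ∀ k ∈ K J, hB k (v' k.2) = hB k (u k.2) then (1:ℝ) else 0) := by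
        rw [if_pos, if_pos, mul_one]
        · rintro ⟨c', j⟩ hk
          simp only [K, Finset.mem_product, Finset.mem_singleton] at hk
          obtain ⟨rfl, hj⟩ := hk
          simp only
          rw [hvJ j hj]
          exact (hh j (hJB hj)).2
        · intro j hj
          rw [hvJ j hj]
          exact (hh j (hJB hj)).1
      refine le_trans (le_of_eq h1) ?_
      refine le_trans ?_ (Finset.single_le_sum
        (f := fun J => ∑ v ∈ C J, (if ∀ j ∈ J, hF j (v j) = hF j (u j) then (1:ℝ) else 0) *
        (if ∀ k ∈ K J, hB k (v k.2) = hB k (u k.2) then (1:ℝ) else 0))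
        (fun J _ => Finset.sum_nonneg fun v _ => hnn J v) hJm)
      exact Finset.single_le_sum
        (f := fun v => (if ∀ j ∈ J, hF j (v j) = hF j (u j) then (1:ℝ) else 0) *
        (if ∀ k ∈ K J, hB k (v k.2) = hB k (u k.2) then (1:ℝ) else 0))
        (fun v _ => hnn J v) hv'm
    · exact Finset.sum_nonneg fun J _ => Finset.sum_nonneg fun v _ => hnn J v
  calc _ ≤ hE (fun hF : (∀ k, W → Zr k) => hE (fun hB : (∀ k, W → Zb k) =>
        ∑ J ∈ B.powerset.filter (fun A => A.Nonempty), ∑ v ∈ C J,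
        (if ∀ j ∈ J, hF j (v j) = hF j (u j) then (1:ℝ) else 0) *
        (if ∀ k ∈ K J, hB k (v k.2) = hB k (u k.2) then (1:ℝ) else 0))) :=
        hE_mono _ _ fun hF => hE_mono _ _ fun hB => hpt hF hB
    _ = ∑ J ∈ B.powerset.filter (fun A => A.Nonempty), ∑ v ∈ C J,
        ∏ j ∈ J, (((Fintype.card (Zr j) : ℝ))⁻¹ * ((Fintype.card (Zb (c, j)) : ℝ))⁻¹) := by
        simp only [hE_sum]
        refine Finset.sum_congr rfl fun J _ => Finset.sum_congr rfl fun v hv => ?_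
        simp only [hC, Finset.mem_filter, Finset.mem_univ, true_and] at hv
        have h2 : hE (fun hB : (∀ k, W → Zb k) =>
            if ∀ k ∈ K J, hB k (v k.2) = hB k (u k.2) then (1:ℝ) else 0) =
            ∏ j ∈ J, ((Fintype.card (Zb (c, j)) : ℝ))⁻¹ := by
          rw [hE_coll (K J) (fun k => v k.2) (fun k => u k.2)]
          · simp [K]
          · intro k hk
            simp only [K, Finset.mem_product] at hk
            exact hv.2 _ hk.2
        simp only [hE_mul, h2]
        simp only [mul_comm _ (∏ j ∈ J, ((Fintype.card (Zb (c, j)) : ℝ))⁻¹)]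
        rw [hE_mul, hE_coll J v u hv.2, Finset.prod_mul_distrib, mul_comm]
    _ ≤ _ := by
        apply Finset.sum_le_sum
        intro J hJ
        simp only [Finset.mem_filter, Finset.mem_powerset] at hJ
        rw [Finset.sum_const, nsmul_eq_mul]
        apply mul_le_mul_of_nonneg_right _ (by positivity)
        refine le_trans ?_ (hN J hJ.1 hJ.2)
        have : C J ⊆ Finset.univ.filter (fun v : ι → W => (∀ j ∉ J, v j = u j) ∧ D B v) := by
          intro v hv
          simp only [hC, Finset.mem_filter, Finset.mem_univ, true_and] at hv ⊢
          exact hv.1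
        exact_mod_cast Finset.card_le_card this

/-- The one-shot coding theorem. -/
theorem oneshot (p : Ω → ℝ) (hp : ∀ ω, 0 ≤ p ω) (hp1 : ∑ ω, p ω = 1)
    (U : ι → Ω → W) (S : Ω → σ)
    (R : Finset ι) (hR : ∀ j ∉ R, Fintype.card (Zr j) = 1) (Ty : Finset Ω)
    (τ : Finset ι → ℝ) (hτ0 : ∀ A, 0 ≤ τ A) (qs : σ → ℝ)
    (hqs : ∀ s, qs s = ∑ ω, if S ω = s then p ω else 0) (hS : ∀ s, 0 < qs s)
    (hτ : ∀ ω ∈ Ty, ∀ A ⊆ R, A.Nonempty →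
      qMS p U S A (fun i => U i ω) (S ω) ≤ qs (S ω) * τ A)
    (η : ℝ) (hη : 0 < η)
    (𝒯 : Finset (Finset ι × Fin 2))
    (D : Finset ι → (ι → W) → Prop) (hD : ∀ B, ∀ ω ∈ Ty, D B (fun j => U j ω))
    (hDB : ∀ B u v, (∀ j ∈ B, u j = v j) → D B u → D B v)
    (N : Finset ι → Finset ι → ℝ) (hN0 : ∀ B J, 0 ≤ N B J)
    (hN : ∀ B J, J ⊆ B → J.Nonempty → ∀ ω ∈ Ty, ∀ F : Finset (ι → W),
      (∀ v ∈ F, (∀ j ∉ J, v j = U j ω) ∧ D B v) → (F.card : ℝ) ≤ N B J) :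
    ∃ (hB : ∀ k, W → Zb k) (enc : σ → Ω) (G : Finset σ),
      (∑ s ∈ Gᶜ, qs s ≤ (1 - ∑ ω ∈ Ty, p ω) +
        ((∑ A ∈ R.powerset.filter (fun A => A.Nonempty),
          (∏ j ∈ A, (Fintype.card (Zr j) : ℝ)) * τ A) / η + η) / 2 +
        ∑ T ∈ 𝒯, ∑ J ∈ T.1.powerset.filter (fun A => A.Nonempty), N T.1 J *
        ∏ j ∈ J, (((Fintype.card (Zr j) : ℝ))⁻¹ * ((Fintype.card (Zb (T.2, j)) : ℝ))⁻¹)) ∧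
      (∀ s ∈ G, enc s ∈ Ty ∧ S (enc s) = s) ∧
      ∀ s ∈ G, ∀ s' ∈ G, ∀ T ∈ 𝒯,
        (∀ j ∈ T.1, hB (T.2, j) (U j (enc s)) = hB (T.2, j) (U j (enc s'))) →
        ∀ j ∈ T.1, U j (enc s) = U j (enc s') := by
  classical
  set κ : ℝ := ∏ j, ((Fintype.card (Zr j) : ℝ))⁻¹ with hκ
  have hκpos : 0 < κ := by positivity
  have hqs1 : ∑ s, qs s = 1 := by
    simp only [hqs]
    rw [Finset.sum_comm]
    simpa using hp1
  have hcardF : ∑ _f : (∀ k, Zr k), κ = 1 := by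
    rw [Finset.sum_const, Finset.card_univ, Fintype.card_pi, nsmul_eq_mul, hκ]
    push_cast
    rw [← Finset.prod_mul_distrib]
    exact Finset.prod_eq_one fun j _ => mul_inv_cancel₀ (by simp)
  let AnyConf : (∀ k, W → Zr k) → (∀ k, W → Zb k) → Ω → Prop :=
    fun hF hB ω => ∃ T ∈ 𝒯, Conf D hF hB T (fun j => U j ω)
  let Good : (∀ k, W → Zr k) → (∀ k, W → Zb k) → σ → (∀ k, Zr k) → Prop :=
    fun hF hB s f => ∃ ω ∈ Ty, S ω = s ∧ (∀ j, hF j (U j ω) = f j) ∧ ¬ AnyConf hF hB ω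
  let bad : (∀ k, W → Zr k) → (∀ k, W → Zb k) → σ → (∀ k, Zr k) → ℝ :=
    fun hF hB s f => if Good hF hB s f then 0 else 1
  let a : σ → Ω → ℝ := fun s ω => if S ω = s then p ω else 0
  have ha0 : ∀ s ω, 0 ≤ a s ω := by
    intro s ω; simp only [a]; split_ifs; exacts [hp ω, le_rfl]
  let ind : (∀ k, W → Zr k) → (∀ k, Zr k) → Ω → ℝ :=
    fun h f ω => if ∀ j, h j (U j ω) = f j then (1:ℝ) else 0
  have hind0 : ∀ h f ω, 0 ≤ ind h f ω := by
    intro h f ω; simp only [ind]; split_ifs <;> norm_num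
  let cf : (∀ k, W → Zr k) → (∀ k, W → Zb k) → Ω → ℝ :=
    fun hF hB ω => ∑ T ∈ 𝒯, if Conf D hF hB T (fun j => U j ω) then (1:ℝ) else 0
  have hcf0 : ∀ hF hB ω, 0 ≤ cf hF hB ω := by
    intro hF hB ω
    exact Finset.sum_nonneg fun T _ => by split_ifs <;> norm_num
  have hcf1 : ∀ hF hB ω, AnyConf hF hB ω → 1 ≤ cf hF hB ω := by
    rintro hF hB ω ⟨T, hT, hc⟩
    have := Finset.single_le_sum (f := fun T => if Conf D hF hB T (fun j => U j ω)
      then (1:ℝ) else 0) (fun T _ => by split_ifs <;> norm_num) hT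
    rw [if_pos hc] at this
    exact this
  -- pointwise bound
  have hpt : ∀ hF hB s f, κ * qs s * bad hF hB s f ≤
      κ * (qs s - ∑ ω ∈ Ty, a s ω) +
      |κ * (∑ ω ∈ Ty, a s ω) - ∑ ω ∈ Ty, a s ω * ind hF f ω| +
      ∑ ω ∈ Ty, a s ω * ind hF f ω * cf hF hB ω := by
    intro hF hB s f
    have h1 : ∑ ω ∈ Ty, a s ω ≤ qs s := by
      rw [hqs]
      exact Finset.sum_le_sum_of_subset_of_nonneg (Finset.subset_univ _) fun ω _ _ => ha0 s ω
    have h2 : 0 ≤ ∑ ω ∈ Ty, a s ω * ind hF f ω * cf hF hB ω :=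
      Finset.sum_nonneg fun ω _ =>
        mul_nonneg (mul_nonneg (ha0 _ _) (hind0 _ _ _)) (hcf0 _ _ _)
    by_cases hg : Good hF hB s f
    · simp only [bad, hg, if_true, mul_zero]
      have := mul_nonneg hκpos.le (sub_nonneg.2 h1)
      positivity
    · simp only [bad, hg, if_false, mul_one]
      have h3 : ∑ ω ∈ Ty, a s ω * ind hF f ω ≤ ∑ ω ∈ Ty, a s ω * ind hF f ω * cf hF hB ω := by
        apply Finset.sum_le_sum
        intro ω hω
        by_cases hs : S ω = s
        · by_cases hf : ∀ j, hF j (U j ω) = f j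
          · have hcon : AnyConf hF hB ω := by
              by_contra hcon
              exact hg ⟨ω, hω, hs, hf, hcon⟩
            exact le_mul_of_one_le_right (mul_nonneg (ha0 _ _) (hind0 _ _ _))
              (hcf1 hF hB ω hcon)
          · simp [ind, hf]
        · simp [a, hs]
      have h4 := le_abs_self (κ * (∑ ω ∈ Ty, a s ω) - ∑ ω ∈ Ty, a s ω * ind hF f ω)
      linarith
  -- summed bound
  have hsum : ∀ hF hB, ∑ f, ∑ s, κ * qs s * bad hF hB s f ≤
      (1 - ∑ ω ∈ Ty, p ω) * 1 +
      (∑ f, ∑ s, |κ * (∑ ω ∈ Ty, a s ω) - ∑ ω ∈ Ty, a s ω * ind hF f ω| +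
      ∑ ω ∈ Ty, p ω * cf hF hB ω) := by
    intro hF hB
    have h1 : ∑ f : (∀ k, Zr k), ∑ s, κ * (qs s - ∑ ω ∈ Ty, a s ω) = 1 - ∑ ω ∈ Ty, p ω := by
      have : ∑ s, ∑ ω ∈ Ty, a s ω = ∑ ω ∈ Ty, p ω := by
        rw [Finset.sum_comm]
        simp [a]
      have h0 : ∑ s, κ * (qs s - ∑ ω ∈ Ty, a s ω) = κ * (1 - ∑ ω ∈ Ty, p ω) := by
        rw [← Finset.mul_sum, Finset.sum_sub_distrib, this, hqs1]
      rw [Finset.sum_congr rfl (fun f _ => h0), ← Finset.sum_mul, hcardF, one_mul]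
    have h2 : ∑ f : (∀ k, Zr k), ∑ s, ∑ ω ∈ Ty, a s ω * ind hF f ω * cf hF hB ω =
        ∑ ω ∈ Ty, p ω * cf hF hB ω := by
      calc _ = ∑ f : (∀ k, Zr k), ∑ ω ∈ Ty, p ω * ind hF f ω * cf hF hB ω := by
            refine Finset.sum_congr rfl fun f _ => ?_
            rw [Finset.sum_comm]
            refine Finset.sum_congr rfl fun ω _ => ?_
            rw [← Finset.sum_mul, ← Finset.sum_mul]
            simp [a]
        _ = _ := by
            rw [Finset.sum_comm]
            refine Finset.sum_congr rfl fun ω _ => ?_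
            rw [← Finset.sum_mul, ← Finset.mul_sum]
            have : ∑ f, ind hF f ω = 1 := by
              simp only [ind]
              rw [Finset.sum_eq_single (fun j => hF j (U j ω))]
              · simp
              · intro f _ hf
                rw [if_neg]
                intro h; exact hf (funext fun j => (h j).symm)
              · simp
            rw [this, mul_one]
    rw [← h2, mul_one, ← h1, ← Finset.sum_add_distrib, ← Finset.sum_add_distrib]
    refine Finset.sum_le_sum fun f _ => ?_
    rw [← Finset.sum_add_distrib, ← Finset.sum_add_distrib]
    refine Finset.sum_le_sum fun s _ => ?_
    have := hpt hF hB s f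
    linarith
  -- expectation
  set V : ℝ := ∑ A ∈ R.powerset.filter (fun A => A.Nonempty),
          (∏ j ∈ A, (Fintype.card (Zr j) : ℝ)) * τ A with hV
  have hexp : hE (fun hF : (∀ k, W → Zr k) => hE (fun hB : (∀ k, W → Zb k) =>
      ∑ f, ∑ s, κ * qs s * bad hF hB s f)) ≤ (1 - ∑ ω ∈ Ty, p ω) + (V / η + η) / 2 +
        ∑ T ∈ 𝒯, ∑ J ∈ T.1.powerset.filter (fun A => A.Nonempty), N T.1 J *
        ∏ j ∈ J, (((Fintype.card (Zr j) : ℝ))⁻¹ * ((Fintype.card (Zb (T.2, j)) : ℝ))⁻¹) := by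
    calc _ ≤ hE (fun hF : (∀ k, W → Zr k) => hE (fun hB : (∀ k, W → Zb k) =>
          (1 - ∑ ω ∈ Ty, p ω) * 1 +
          ((∑ f, ∑ s, |κ * (∑ ω ∈ Ty, a s ω) - ∑ ω ∈ Ty, a s ω * ind hF f ω|) * 1 +
          ∑ ω ∈ Ty, p ω * cf hF hB ω))) := by
          refine hE_mono _ _ fun hF => hE_mono _ _ fun hB => ?_
          rw [mul_one (∑ f, _)]
          exact hsum hF hB
      _ = (1 - ∑ ω ∈ Ty, p ω) +
          (∑ f, ∑ s, hE (fun hF : (∀ k, W → Zr k) =>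
            |κ * (∑ ω ∈ Ty, a s ω) - ∑ ω ∈ Ty, a s ω * ind hF f ω|) +
          ∑ ω ∈ Ty, p ω * ∑ T ∈ 𝒯, hE (fun hF : (∀ k, W → Zr k) =>
            hE (fun hB : (∀ k, W → Zb k) =>
              if Conf D hF hB T (fun j => U j ω) then (1:ℝ) else 0))) := by
          simp only [hE_add, hE_mul, hE_const, hE_sum, mul_one, cf]
      _ ≤ (1 - ∑ ω ∈ Ty, p ω) +
          (∑ f : (∀ k, Zr k), ∑ s, κ * qs s * ((V / η + η) / 2) +
          ∑ ω ∈ Ty, p ω * ∑ T ∈ 𝒯, ∑ J ∈ T.1.powerset.filter (fun A => A.Nonempty), N T.1 J *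
        ∏ j ∈ J, (((Fintype.card (Zr j) : ℝ))⁻¹ * ((Fintype.card (Zb (T.2, j)) : ℝ))⁻¹)) := by
          refine add_le_add le_rfl (add_le_add ?_ ?_)
          · refine Finset.sum_le_sum fun f _ => Finset.sum_le_sum fun s _ => ?_
            exact osrb_fixed p hp U S R hR Ty τ hτ0 qs hqs hS hτ η hη s f
          · refine Finset.sum_le_sum fun ω hω => ?_
            refine mul_le_mul_of_nonneg_left ?_ (hp ω)
            refine Finset.sum_le_sum fun T _ => ?_
            refine sw_fixed D hDB (N T.1) T (fun j => U j ω) ?_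
            intro J hJ hJn
            apply hN T.1 J hJ hJn ω hω
            intro v hv
            simpa using hv
      _ ≤ _ := by
          have e1 : ∑ f : (∀ k, Zr k), ∑ s, κ * qs s * ((V / η + η) / 2) = (V / η + η) / 2 := by
            simp only [← Finset.sum_mul, ← Finset.mul_sum, hqs1, mul_one, hcardF, one_mul]
          rw [e1, ← Finset.sum_mul, ← add_assoc]
          refine add_le_add le_rfl ?_
          have h1 : ∑ ω ∈ Ty, p ω ≤ 1 := by
            rw [← hp1]
            exact Finset.sum_le_sum_of_subset_of_nonneg (Finset.subset_univ _) fun ω _ _ => hp ω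
          apply mul_le_of_le_one_left _ h1
          refine Finset.sum_nonneg fun T _ => Finset.sum_nonneg fun J hJ => ?_
          exact mul_nonneg (hN0 _ _) (by positivity)
  obtain ⟨hF, h1⟩ := hE_exists (fun hF : (∀ k, W → Zr k) => hE (fun hB : (∀ k, W → Zb k) =>
      ∑ f, ∑ s, κ * qs s * bad hF hB s f))
  obtain ⟨hB, h2⟩ := hE_exists (fun hB : (∀ k, W → Zb k) =>
      ∑ f, ∑ s, κ * qs s * bad hF hB s f)
  have h3 := h2.trans (h1.trans hexp)
  have h4 : ∃ f, ∑ s, qs s * bad hF hB s f ≤ ∑ f, ∑ s, κ * qs s * bad hF hB s f := by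
    by_contra! hcon
    have : ∑ f : (∀ k, Zr k), κ * (∑ f, ∑ s, κ * qs s * bad hF hB s f) <
        ∑ f, κ * ∑ s, qs s * bad hF hB s f := by
      apply Finset.sum_lt_sum_of_nonempty Finset.univ_nonempty
      intro f _
      exact mul_lt_mul_of_pos_left (hcon f) hκpos
    rw [← Finset.sum_mul, hcardF, one_mul] at this
    simp only [Finset.mul_sum, ← mul_assoc] at this
    exact lt_irrefl _ this
  obtain ⟨f, hf⟩ := h4
  have hΩ : Nonempty Ω := by
    by_contra hcon
    rw [not_nonempty_iff] at hcon
    simp at hp1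
  refine ⟨hB, fun s => if h : Good hF hB s f then h.choose else Classical.choice hΩ,
    Finset.univ.filter (fun s => Good hF hB s f), ?_, ?_, ?_⟩
  · refine le_trans (le_of_eq ?_) (hf.trans h3)
    rw [Finset.compl_filter, Finset.sum_filter]
    refine Finset.sum_congr rfl fun s _ => ?_
    by_cases hg : Good hF hB s f <;> simp [bad, hg]
  · intro s hs
    have hg : Good hF hB s f := by simpa using hs
    simp only [hg, dif_pos]
    exact ⟨hg.choose_spec.1, hg.choose_spec.2.1⟩
  · intro s hs s' hs' T hT
    have hg : Good hF hB s f := by simpa using hs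
    have hg' : Good hF hB s' f := by simpa using hs'
    simp only [hg, hg', dif_pos]
    obtain ⟨a1, a2, a3, a4⟩ := hg.choose_spec
    obtain ⟨b1, b2, b3, b4⟩ := hg'.choose_spec
    intro hh
    by_contra hcon
    push Not at hcon
    apply b4
    refine ⟨T, hT, fun j => U j hg.choose, hD _ _ a1, ?_, hcon⟩
    intro j hj
    exact ⟨by rw [a3 j, b3 j], hh j hj⟩

end OneShot2


/-! ### Product distributions, weak law of large numbers, typical sequences -/

section NLetter

set_option linter.unusedSectionVars false

variable {Ω W σ ι : Type} [Fintype Ω] [Fintype W] [DecidableEq W] [Fintype σ] [DecidableEq σ]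
  [Fintype ι] [DecidableEq ι]

/-- i.i.d. extension of a probability mass function. -/
noncomputable def pnF (p : Ω → ℝ) (n : ℕ) (ω : Fin n → Ω) : ℝ := ∏ k, p (ω k)

lemma pnF_event (p : Ω → ℝ) (n : ℕ) (P : Fin n → Ω → Prop) [∀ k, DecidablePred (P k)]
    (Q : (Fin n → Ω) → Prop) [DecidablePred Q] (hQ : ∀ ω, Q ω ↔ ∀ k, P k (ω k)) :
    (∑ ω : Fin n → Ω, if Q ω then pnF p n ω else 0) =
      ∏ k, ∑ x, if P k x then p x else 0 := by
  classical
  rw [Finset.prod_univ_sum, Fintype.piFinset_univ]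
  refine Finset.sum_congr rfl fun ω _ => ?_
  by_cases h : Q ω
  · rw [if_pos h]
    have h' := (hQ ω).1 h
    exact Finset.prod_congr rfl fun k _ => by rw [if_pos (h' k)]
  · rw [if_neg h]
    rw [hQ] at h
    push Not at h
    obtain ⟨k, hk⟩ := h
    exact (Finset.prod_eq_zero (Finset.mem_univ k) (by simp [hk])).symm

lemma pnF_sum (p : Ω → ℝ) (hp1 : ∑ ω, p ω = 1) (n : ℕ) : ∑ ω, pnF p n ω = 1 := by
  have := pnF_event p n (fun _ _ => True) (fun _ => True) (by simp)
  simpa [hp1] using this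

lemma pnF_nonneg (p : Ω → ℝ) (hp : ∀ ω, 0 ≤ p ω) (n : ℕ) (ω : Fin n → Ω) : 0 ≤ pnF p n ω :=
  Finset.prod_nonneg fun k _ => hp _

lemma qM_pnF (p : Ω → ℝ) (n : ℕ) (U : ι → Ω → W) (A : Finset ι) (v : ι → Fin n → W) :
    qM (pnF p n) (fun i ω k => U i (ω k)) A v = ∏ k, qM p U A (fun i => v i k) := by
  unfold qM
  apply pnF_event p n (fun k x => ∀ i ∈ A, U i x = v i k)
  intro ω
  constructor
  · intro h k i hi
    exact congrFun (h i hi) k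
  · intro h i hi
    funext k
    exact h k i hi

lemma qMS_pnF (p : Ω → ℝ) (n : ℕ) (U : ι → Ω → W) (S : Ω → σ) (A : Finset ι)
    (v : ι → Fin n → W) (s : Fin n → σ) :
    qMS (pnF p n) (fun i ω k => U i (ω k)) (fun ω k => S (ω k)) A v s =
      ∏ k, qMS p U S A (fun i => v i k) (s k) := by
  unfold qMS
  apply pnF_event p n (fun k x => (∀ i ∈ A, U i x = v i k) ∧ S x = s k)
  intro ω
  constructor
  · intro h k
    exact ⟨fun i hi => congrFun (h.1 i hi) k, congrFun h.2 k⟩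
  · intro h
    exact ⟨fun i hi => funext fun k => (h k).1 i hi, funext fun k => (h k).2⟩

lemma qs_pnF (p : Ω → ℝ) (n : ℕ) (S : Ω → σ) (s : Fin n → σ) :
    (∑ ω, if (fun k => S (ω k)) = s then pnF p n ω else 0) =
      ∏ k, ∑ x, if S x = s k then p x else 0 := by
  apply pnF_event p n (fun k x => S x = s k)
  intro ω
  exact funext_iff

lemma moments (p : Ω → ℝ) (hp1 : ∑ ω, p ω = 1) (g : Ω → ℝ) (hg : ∑ ω, p ω * g ω = 0) (n : ℕ) :
    (∑ ω, pnF p n ω * (∑ k, g (ω k)) = 0) ∧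
    (∑ ω, pnF p n ω * (∑ k, g (ω k)) ^ 2 = n * ∑ x, p x * g x ^ 2) := by
  induction n with
  | zero => simp
  | succ n ih =>
    have hsplit : ∀ φ : (Fin (n+1) → Ω) → ℝ, ∑ ω, φ ω = ∑ x : Ω, ∑ ω : Fin n → Ω, φ (Fin.cons x ω) := by
      intro φ
      rw [← (Fin.consEquiv (fun _ : Fin (n+1) => Ω)).sum_comp, Fintype.sum_prod_type]
      rfl
    have h1 := pnF_sum p hp1 n
    have hcons : ∀ x (ω : Fin n → Ω), pnF p (n+1) (Fin.cons x ω) = p x * pnF p n ω := by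
      intro x ω
      simp [pnF, Fin.prod_univ_succ]
    have hs : ∀ x (ω : Fin n → Ω), ∑ k, g ((Fin.cons x ω : Fin (n+1) → Ω) k) = g x + ∑ k, g (ω k) := by
      intro x ω
      simp [Fin.sum_univ_succ]
    constructor
    · rw [hsplit]
      simp only [hcons, hs]
      have : ∀ x, ∑ ω, p x * pnF p n ω * (g x + ∑ k, g (ω k)) = p x * g x := by
        intro x
        calc _ = p x * g x * ∑ ω, pnF p n ω + p x * ∑ ω, pnF p n ω * ∑ k, g (ω k) := by
              rw [Finset.mul_sum, Finset.mul_sum, ← Finset.sum_add_distrib]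
              exact Finset.sum_congr rfl fun ω _ => by ring
          _ = _ := by rw [h1, ih.1]; ring
      simp only [this, hg]
    · rw [hsplit]
      simp only [hcons, hs]
      have : ∀ x, ∑ ω, p x * pnF p n ω * (g x + ∑ k, g (ω k)) ^ 2 =
          p x * g x ^ 2 + p x * (n * ∑ x, p x * g x ^ 2) := by
        intro x
        calc _ = p x * g x ^ 2 * ∑ ω, pnF p n ω + 2 * p x * g x * ∑ ω, pnF p n ω * ∑ k, g (ω k) +
              p x * ∑ ω, pnF p n ω * (∑ k, g (ω k)) ^ 2 := by
              rw [Finset.mul_sum, Finset.mul_sum, Finset.mul_sum, ← Finset.sum_add_distrib,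
                ← Finset.sum_add_distrib]
              exact Finset.sum_congr rfl fun ω _ => by ring
          _ = _ := by rw [h1, ih.1, ih.2]; ring
      simp only [this]
      rw [Finset.sum_add_distrib, ← Finset.sum_mul, hp1]
      push_cast; ring

lemma cheb (p : Ω → ℝ) (hp : ∀ ω, 0 ≤ p ω) (hp1 : ∑ ω, p ω = 1) (g : Ω → ℝ) (δ : ℝ) (hδ : 0 < δ)
    (n : ℕ) (hn : 0 < n) :
    (∑ ω, if |∑ k, g (ω k) - n * ∑ x, p x * g x| ≤ n * δ then 0 else pnF p n ω) ≤
      (∑ x, p x * (g x - ∑ x, p x * g x) ^ 2) / δ ^ 2 / n := by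
  set μ := ∑ x, p x * g x with hμ
  have hm := (moments p hp1 (fun x => g x - μ) (by
    simp only [mul_sub, Finset.sum_sub_distrib, ← Finset.sum_mul, hp1, ← hμ]; ring) n).2
  have hn' : (0:ℝ) < n := by exact_mod_cast hn
  rw [div_div, le_div_iff₀ (by positivity)]
  have key : ∑ ω, (if |∑ k, g (ω k) - n * μ| ≤ n * δ then 0 else pnF p n ω) * (n * δ) ^ 2 ≤
      ∑ ω, pnF p n ω * (∑ k, (g (ω k) - μ)) ^ 2 := by
    apply Finset.sum_le_sum
    intro ω _
    have e : ∑ k, (g (ω k) - μ) = ∑ k, g (ω k) - n * μ := by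
      simp [Finset.sum_sub_distrib]
    rw [e]
    have h0 := pnF_nonneg p hp n ω
    split_ifs with h
    · rw [zero_mul]; positivity
    · push Not at h
      apply mul_le_mul_of_nonneg_left _ h0
      rw [← sq_abs (∑ k, g (ω k) - n * μ)]
      have : 0 ≤ n * δ := by positivity
      exact pow_le_pow_left₀ this h.le 2
  rw [← Finset.sum_mul, hm] at key
  have : (n:ℝ) * ((∑ ω, if |∑ k, g (ω k) - n * μ| ≤ n * δ then 0 else pnF p n ω) * (δ ^ 2 * n)) ≤
      n * (∑ x, p x * (g x - μ) ^ 2) := by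
    refine le_trans (le_of_eq ?_) key
    ring
  exact le_of_mul_le_mul_left this hn'

/-- Entropy of the subfamily `A`, as an expectation. -/
noncomputable def HM (p : Ω → ℝ) (U : ι → Ω → W) (A : Finset ι) : ℝ :=
  ∑ ω, p ω * (- Real.logb 2 (qM p U A (fun i => U i ω)))

/-- Joint entropy of the subfamily `A` and `S`, as an expectation. -/
noncomputable def HMS (p : Ω → ℝ) (U : ι → Ω → W) (S : Ω → σ) (A : Finset ι) : ℝ :=
  ∑ ω, p ω * (- Real.logb 2 (qMS p U S A (fun i => U i ω) (S ω)))

lemma ent_eq {δ : Type} [Fintype δ] [DecidableEq δ] (p : Ω → ℝ) (X : Ω → δ) :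
    ent p X = ∑ ω, p ω * (- Real.logb 2 (prOf p X (X ω))) := by
  unfold ent
  have : ∀ x, -(prOf p X x * Real.logb 2 (prOf p X x)) =
      ∑ ω, if X ω = x then p ω * (- Real.logb 2 (prOf p X x)) else 0 := by
    intro x
    conv_lhs => rw [← mul_neg]; arg 1; rw [prOf]
    rw [Finset.sum_mul]
    exact Finset.sum_congr rfl fun ω _ => by split_ifs <;> simp
  simp only [this]
  rw [Finset.sum_comm]
  refine Finset.sum_congr rfl fun ω _ => ?_
  simp

lemma jEnt_eq {M : ℕ} (p : Ω → ℝ) (U : Fin M → Ω → W) (A : Finset (Fin M)) :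
    jEnt p U A = HM p U A := by
  unfold jEnt HM
  rw [ent_eq]
  refine Finset.sum_congr rfl fun ω _ => ?_
  congr 3
  unfold prOf qM
  refine Finset.sum_congr rfl fun ω' _ => ?_
  simp [funext_iff]

lemma jEntS_eq {M : ℕ} (p : Ω → ℝ) (U : Fin M → Ω → W) (S : Ω → σ) (A : Finset (Fin M)) :
    ent p (fun ω => ((fun i : {i // i ∈ A} => U i.1 ω), S ω)) = HMS p U S A := by
  unfold HMS
  rw [ent_eq]
  refine Finset.sum_congr rfl fun ω _ => ?_
  congr 3
  unfold prOf qMS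
  refine Finset.sum_congr rfl fun ω' _ => ?_
  simp [funext_iff]

lemma entS_eq (p : Ω → ℝ) (U : ι → Ω → W) (S : Ω → σ) :
    ent p S = HMS p U S ∅ := by
  unfold HMS
  rw [ent_eq]
  refine Finset.sum_congr rfl fun ω _ => ?_
  congr 3
  unfold prOf qMS
  refine Finset.sum_congr rfl fun ω' _ => ?_
  simp

lemma qM_self_pos (p : Ω → ℝ) (hp : ∀ ω, 0 ≤ p ω) (U : ι → Ω → W) (A : Finset ι) (ω : Ω)
    (h : p ω ≠ 0) : 0 < qM p U A (fun i => U i ω) := by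
  have h' : 0 < p ω := lt_of_le_of_ne (hp ω) h.symm
  refine lt_of_lt_of_le h' ?_
  have := Finset.single_le_sum (s := Finset.univ)
    (f := fun ω' => if ∀ i ∈ A, U i ω' = U i ω then p ω' else 0)
    (fun ω' _ => by
      show (0:ℝ) ≤ if _ then _ else _
      split_ifs
      exacts [hp _, le_rfl]) (Finset.mem_univ ω)
  simpa [qM] using this

lemma qMS_self_pos (p : Ω → ℝ) (hp : ∀ ω, 0 ≤ p ω) (U : ι → Ω → W) (S : Ω → σ) (A : Finset ι)
    (ω : Ω) (h : p ω ≠ 0) : 0 < qMS p U S A (fun i => U i ω) (S ω) := by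
  have h' : 0 < p ω := lt_of_le_of_ne (hp ω) h.symm
  refine lt_of_lt_of_le h' ?_
  have := Finset.single_le_sum (s := Finset.univ)
    (f := fun ω' => if (∀ i ∈ A, U i ω' = U i ω) ∧ S ω' = S ω then p ω' else 0)
    (fun ω' _ => by
      show (0:ℝ) ≤ if _ then _ else _
      split_ifs
      exacts [hp _, le_rfl]) (Finset.mem_univ ω)
  simpa [qMS] using this

lemma prod_bounds {n : ℕ} (a : Fin n → ℝ) (ha : ∀ k, 0 < a k) (H d : ℝ)
    (h : |∑ k, (- Real.logb 2 (a k)) - n * H| ≤ n * d) :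
    (2:ℝ) ^ (-(n * (H + d))) ≤ ∏ k, a k ∧ ∏ k, a k ≤ (2:ℝ) ^ (-(n * (H - d))) := by
  have e : ∏ k, a k = (2:ℝ) ^ (∑ k, Real.logb 2 (a k)) := by
    rw [Real.rpow_sum_of_pos (by norm_num)]
    exact Finset.prod_congr rfl fun k _ =>
      (Real.rpow_logb (by norm_num) (by norm_num) (ha k)).symm
  rw [e, Finset.sum_neg_distrib] at *
  rw [abs_le] at h
  constructor
  · apply Real.rpow_le_rpow_of_exponent_le (by norm_num); linarith [h.2]
  · apply Real.rpow_le_rpow_of_exponent_le (by norm_num); linarith [h.1]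

/-- The typical set. -/
noncomputable def TyF (p : Ω → ℝ) (U : ι → Ω → W) (S : Ω → σ) (d : ℝ) (n : ℕ) :
    Finset (Fin n → Ω) := by
  classical
  exact Finset.univ.filter (fun ω => (∀ k, p (ω k) ≠ 0) ∧ ∀ A : Finset ι,
    |∑ k, (- Real.logb 2 (qM p U A (fun i => U i (ω k)))) - n * HM p U A| ≤ n * d ∧
    |∑ k, (- Real.logb 2 (qMS p U S A (fun i => U i (ω k)) (S (ω k)))) - n * HMS p U S A| ≤ n * d)

lemma mem_TyF (p : Ω → ℝ) (U : ι → Ω → W) (S : Ω → σ) (d : ℝ) (n : ℕ) (ω : Fin n → Ω) :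
    ω ∈ TyF p U S d n ↔ (∀ k, p (ω k) ≠ 0) ∧ ∀ A : Finset ι,
    |∑ k, (- Real.logb 2 (qM p U A (fun i => U i (ω k)))) - n * HM p U A| ≤ n * d ∧
    |∑ k, (- Real.logb 2 (qMS p U S A (fun i => U i (ω k)) (S (ω k)))) - n * HMS p U S A|
      ≤ n * d := by
  classical
  simp [TyF]

lemma TyF_prob (p : Ω → ℝ) (hp : ∀ ω, 0 ≤ p ω) (hp1 : ∑ ω, p ω = 1) (U : ι → Ω → W) (S : Ω → σ)
    (d : ℝ) (hd : 0 < d) : ∃ K : ℝ, ∀ n : ℕ, 0 < n →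
      1 - ∑ ω ∈ TyF p U S d n, pnF p n ω ≤ K / n := by
  classical
  let g : Finset ι → Ω → ℝ := fun A ω => - Real.logb 2 (qM p U A (fun i => U i ω))
  let g' : Finset ι → Ω → ℝ := fun A ω => - Real.logb 2 (qMS p U S A (fun i => U i ω) (S ω))
  refine ⟨∑ A : Finset ι, ((∑ x, p x * (g A x - ∑ x, p x * g A x) ^ 2) / d ^ 2 +
    (∑ x, p x * (g' A x - ∑ x, p x * g' A x) ^ 2) / d ^ 2), ?_⟩
  intro n hn
  calc 1 - ∑ ω ∈ TyF p U S d n, pnF p n ω = ∑ ω ∈ (TyF p U S d n)ᶜ, pnF p n ω := by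
        rw [← pnF_sum p hp1 n, ← Finset.sum_add_sum_compl (TyF p U S d n)]; ring
    _ = ∑ ω, if ω ∈ (TyF p U S d n)ᶜ then pnF p n ω else 0 := by
        rw [Finset.sum_ite_mem, Finset.univ_inter]
    _ ≤ ∑ ω, ∑ A : Finset ι,
        ((if |∑ k, g A (ω k) - n * ∑ x, p x * g A x| ≤ n * d then 0 else pnF p n ω) +
        (if |∑ k, g' A (ω k) - n * ∑ x, p x * g' A x| ≤ n * d then 0 else pnF p n ω)) := by
        apply Finset.sum_le_sum
        intro ω _
        have h0 := pnF_nonneg p hp n ω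
        have hnn : ∀ A : Finset ι,
          0 ≤ (if |∑ k, g A (ω k) - n * ∑ x, p x * g A x| ≤ n * d then 0 else pnF p n ω) +
            (if |∑ k, g' A (ω k) - n * ∑ x, p x * g' A x| ≤ n * d then 0 else pnF p n ω) := by
          intro A
          split_ifs <;> linarith
        split_ifs with hm
        · rw [Finset.mem_compl, mem_TyF, not_and_or] at hm
          rcases hm with hm | hm
          · push Not at hm
            obtain ⟨k, hk⟩ := hm
            have : pnF p n ω = 0 := Finset.prod_eq_zero (Finset.mem_univ k) hk
            rw [this] at hnn ⊢
            exact Finset.sum_nonneg fun A _ => hnn A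
          · rw [not_forall] at hm
            obtain ⟨A, hA⟩ := hm
            refine le_trans ?_ (Finset.single_le_sum (fun A _ => hnn A) (Finset.mem_univ A))
            rw [not_and_or] at hA
            rcases hA with hA | hA
            · have hA' : ¬ |∑ k, g A (ω k) - n * ∑ x, p x * g A x| ≤ n * d := hA
              rw [if_neg hA']
              split_ifs <;> linarith
            · have hA' : ¬ |∑ k, g' A (ω k) - n * ∑ x, p x * g' A x| ≤ n * d := hA
              rw [add_comm, if_neg hA']
              split_ifs <;> linarith
        · exact Finset.sum_nonneg fun A _ => hnn A
    _ = ∑ A : Finset ι,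
        (∑ ω, (if |∑ k, g A (ω k) - n * ∑ x, p x * g A x| ≤ n * d then 0 else pnF p n ω) +
        ∑ ω, (if |∑ k, g' A (ω k) - n * ∑ x, p x * g' A x| ≤ n * d then 0 else pnF p n ω)) := by
        rw [Finset.sum_comm]
        exact Finset.sum_congr rfl fun A _ => Finset.sum_add_distrib
    _ ≤ _ := by
        rw [Finset.sum_div]
        apply Finset.sum_le_sum
        intro A _
        rw [add_div]
        exact add_le_add (cheb p hp hp1 _ d hd n hn) (cheb p hp hp1 _ d hd n hn)

lemma sum_qM_fiber (p : Ω → ℝ) (hp : ∀ ω, 0 ≤ p ω) (U : ι → Ω → W) (B J : Finset ι) (hJ : J ⊆ B)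
    (u : ι → W) (F : Finset (ι → W)) (hF : ∀ v ∈ F, ∀ j ∉ J, v j = u j) :
    ∑ v ∈ F, qM p U B v ≤ qM p U (B \ J) u := by
  unfold qM
  rw [Finset.sum_comm]
  apply Finset.sum_le_sum
  intro ω _
  by_cases h : ∀ i ∈ B \ J, U i ω = u i
  · rw [if_pos h]
    set v0 : ι → W := fun j => if j ∈ J then U j ω else u j with hv0
    have : ∀ v ∈ F, (if ∀ i ∈ B, U i ω = v i then p ω else 0) ≤ if v = v0 then p ω else 0 := by
      intro v hv
      split_ifs with h1 h2 h2
      · exact le_rfl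
      · exfalso
        apply h2
        funext j
        by_cases hj : j ∈ J
        · simp [hv0, hj, h1 j (hJ hj)]
        · simp [hv0, hj, hF v hv j hj]
      · exact hp ω
      · exact le_rfl
    refine (Finset.sum_le_sum this).trans ?_
    rw [Finset.sum_ite_eq']
    split_ifs
    exacts [le_rfl, hp ω]
  · rw [if_neg h]
    apply le_of_eq
    apply Finset.sum_eq_zero
    intro v hv
    rw [if_neg]
    intro h1
    apply h
    intro i hi
    rw [Finset.mem_sdiff] at hi
    rw [h1 i hi.1, hF v hv i hi.2]

end NLetter


/-! ### The n-letter coding theorem -/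

section NLetterThm

set_option linter.unusedSectionVars false

variable {Ω W σ ι : Type} [Fintype Ω] [Fintype W] [DecidableEq W] [Fintype σ] [DecidableEq σ]
  [Fintype ι] [DecidableEq ι]

lemma tendsto_two_rpow (d : ℝ) (hd : 0 < d) :
    Filter.Tendsto (fun n : ℕ => (2:ℝ) ^ (-(n * d))) Filter.atTop (nhds 0) := by
  have h : (fun n : ℕ => (2:ℝ) ^ (-(n * d))) = fun n : ℕ => ((2:ℝ) ^ (-d)) ^ n := by
    funext n
    rw [← Real.rpow_mul_natCast (by norm_num)]
    congr 1; ring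
  rw [h]
  apply tendsto_pow_atTop_nhds_zero_of_lt_one (by positivity)
  exact Real.rpow_lt_one_of_one_lt_of_neg (by norm_num) (by linarith)

lemma card_bits (m : ℕ) : (Fintype.card (Fin m → ZMod 2) : ℝ) = (2:ℝ) ^ (m:ℝ) := by
  simp [ZMod.card]

lemma prod_card_bits (A : Finset ι) (r : ι → ℕ) :
    ∏ j ∈ A, (Fintype.card (Fin (r j) → ZMod 2) : ℝ) = (2:ℝ) ^ (∑ j ∈ A, (r j : ℝ)) := by
  rw [Real.rpow_sum_of_pos (by norm_num)]
  exact Finset.prod_congr rfl fun j _ => card_bits _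

theorem nletter (p : Ω → ℝ) (hp : ∀ ω, 0 ≤ p ω) (hp1 : ∑ ω, p ω = 1)
    (U : ι → Ω → W) (S : Ω → σ) (hS : ∀ s, 0 < ∑ ω, if S ω = s then p ω else 0)
    (Hi γr : ι → ℝ) (ρ : Fin 2 → ι → ℝ) (hρ : ∀ c j, 0 ≤ ρ c j)
    (𝒯 : Finset (Finset ι × Fin 2))
    (cov : ∀ A : Finset ι, ∑ j ∈ A, Hi j - (HMS p U S A - HMS p U S ∅) ≤ ∑ j ∈ A, γr j)
    (pack : ∀ T ∈ 𝒯, ∀ J ⊆ T.1, ∑ j ∈ J, (γr j - ρ T.2 j) ≤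
      ∑ j ∈ J, Hi j - (HM p U T.1 - HM p U (T.1 \ J)))
    (δ ε : ℝ) (hδ : 0 < δ) (hε : 0 < ε) :
    ∃ n₀ : ℕ, ∀ n ≥ n₀, ∃ (b : Fin 2 → ι → ℕ)
      (hB : ∀ k : Fin 2 × ι, (Fin n → W) → (Fin (b k.1 k.2) → ZMod 2))
      (enc : (Fin n → σ) → (Fin n → Ω)) (G : Finset (Fin n → σ)),
      (∀ c j, (b c j : ℝ) ≤ n * (ρ c j + δ)) ∧
      (∑ s ∈ Gᶜ, ∏ k, (∑ ω, if S ω = s k then p ω else 0) ≤ ε) ∧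
      (∀ s ∈ G, ∀ k, p (enc s k) ≠ 0 ∧ S (enc s k) = s k) ∧
      ∀ s ∈ G, ∀ s' ∈ G, ∀ T ∈ 𝒯,
        (∀ j ∈ T.1, hB (T.2, j) (fun k => U j (enc s k)) = hB (T.2, j) (fun k => U j (enc s' k))) →
        ∀ j ∈ T.1, ∀ k, U j (enc s k) = U j (enc s' k) := by
  classical
  set d : ℝ := δ / 10 with hd_def
  have hd : 0 < d := by positivity
  obtain ⟨K, hK⟩ := TyF_prob p hp hp1 U S d hd
  set c1 : ℝ := ((Finset.univ : Finset (Finset ι)).card : ℝ) with hc1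
  set c2 : ℝ := (𝒯.card : ℝ) * c1 with hc2
  have hlim : Filter.Tendsto (fun n : ℕ => K / n + (c1 * (2:ℝ) ^ (-(n * d)) / ε + ε) / 2 +
      c2 * (2:ℝ) ^ (-(n * d))) Filter.atTop (nhds (0 + (c1 * 0 / ε + ε) / 2 + c2 * 0)) := by
    have h1 := tendsto_two_rpow d hd
    have h2 : Filter.Tendsto (fun n : ℕ => K / n) Filter.atTop (nhds 0) :=
      tendsto_const_div_atTop_nhds_zero_nat K
    exact (h2.add ((((h1.const_mul c1).div_const ε).add_const ε).div_const 2)).add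
      (h1.const_mul c2)
  have hev := hlim.eventually (gt_mem_nhds (show 0 + (c1 * 0 / ε + ε) / 2 + c2 * 0 < ε by
    simp; linarith))
  obtain ⟨n₁, hn₁⟩ := Filter.eventually_atTop.1 hev
  obtain ⟨n₂, hn₂⟩ := exists_nat_gt (1 / d)
  refine ⟨max n₁ (max n₂ 1), fun n hn => ?_⟩
  have hnn1 : n₁ ≤ n := le_trans (le_max_left _ _) hn
  have hnn2 : n₂ ≤ n := le_trans (le_trans (le_max_left _ _) (le_max_right _ _)) hn
  have hnpos : 0 < n := lt_of_lt_of_le Nat.one_pos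
    (le_trans (le_trans (le_max_right _ _) (le_max_right _ _)) hn)
  have hnR : (0:ℝ) < n := by exact_mod_cast hnpos
  have hnd : 1 ≤ n * d := by
    have : 1 / d < n := lt_of_lt_of_le hn₂ (by exact_mod_cast hnn2)
    rw [div_lt_iff₀ hd] at this
    exact this.le
  -- parameters
  let r : ι → ℕ := fun j => ⌊(n:ℝ) * (Hi j - γr j - 3 * d)⌋₊
  let b : Fin 2 → ι → ℕ := fun c j => ⌈(n:ℝ) * (ρ c j + 8 * d)⌉₊
  let R : Finset ι := Finset.univ.filter (fun j => r j ≠ 0)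
  have hr_le : ∀ j ∈ R, (r j : ℝ) ≤ n * (Hi j - γr j - 3 * d) := by
    intro j hj
    have : r j ≠ 0 := by simpa [R] using hj
    apply Nat.floor_le
    by_contra hneg
    exact this (Nat.floor_of_nonpos (not_le.1 hneg).le)
  have hr_ge : ∀ j, (n:ℝ) * (Hi j - γr j - 3 * d) - 1 ≤ r j := fun j =>
    (Nat.sub_one_lt_floor _).le
  have hb_ge : ∀ c j, (n:ℝ) * (ρ c j + 8 * d) ≤ b c j := fun c j => Nat.le_ceil _
  have hb_le : ∀ c j, (b c j : ℝ) ≤ n * (ρ c j + δ) := by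
    intro c j
    have h0 : 0 ≤ (n:ℝ) * (ρ c j + 8 * d) := mul_nonneg hnR.le (by have := hρ c j; linarith)
    have h1 : (b c j : ℝ) < n * (ρ c j + 8 * d) + 1 := Nat.ceil_lt_add_one h0
    have h2 : n * (ρ c j + δ) = n * (ρ c j + 8 * d) + 2 * (n * d) := by rw [hd_def]; ring
    linarith
  let Un : ι → (Fin n → Ω) → (Fin n → W) := fun i ω k => U i (ω k)
  let Sn : (Fin n → Ω) → (Fin n → σ) := fun ω k => S (ω k)
  have hTM : ∀ ω ∈ TyF p U S d n, ∀ A : Finset ι,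
      (2:ℝ) ^ (-(n * (HM p U A + d))) ≤ qM (pnF p n) Un A (fun i => Un i ω) ∧
      qM (pnF p n) Un A (fun i => Un i ω) ≤ (2:ℝ) ^ (-(n * (HM p U A - d))) := by
    intro ω hω A
    rw [mem_TyF] at hω
    rw [qM_pnF]
    exact prod_bounds _ (fun k => qM_self_pos p hp U A (ω k) (hω.1 k)) _ _ (hω.2 A).1
  have hTMS : ∀ ω ∈ TyF p U S d n, ∀ A : Finset ι,
      (2:ℝ) ^ (-(n * (HMS p U S A + d))) ≤ qMS (pnF p n) Un Sn A (fun i => Un i ω) (Sn ω) ∧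
      qMS (pnF p n) Un Sn A (fun i => Un i ω) (Sn ω) ≤ (2:ℝ) ^ (-(n * (HMS p U S A - d))) := by
    intro ω hω A
    rw [mem_TyF] at hω
    rw [qMS_pnF]
    exact prod_bounds _ (fun k => qMS_self_pos p hp U S A (ω k) (hω.1 k)) _ _ (hω.2 A).2
  let qs : (Fin n → σ) → ℝ := fun s => ∏ k, ∑ x, if S x = s k then p x else 0
  have hqs0 : ∀ ω, qs (Sn ω) = qMS (pnF p n) Un Sn ∅ (fun i => Un i ω) (Sn ω) := by
    intro ω
    show (∏ k, ∑ x, if S x = Sn ω k then p x else 0) = _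
    rw [← qs_pnF]
    unfold qMS
    simp [Sn]
  let τ : Finset ι → ℝ := fun A => (2:ℝ) ^ (-(n * (HMS p U S A - HMS p U S ∅ - 2 * d)))
  let D : Finset ι → (ι → Fin n → W) → Prop := fun B v =>
    (2:ℝ) ^ (-(n * (HM p U B + d))) ≤ qM (pnF p n) Un B v
  let N : Finset ι → Finset ι → ℝ := fun B J => (2:ℝ) ^ (n * (HM p U B - HM p U (B \ J) + 2 * d))
  obtain ⟨hB, enc, G, hG1, hG2, hG3⟩ := oneshot (Zr := fun j => Fin (r j) → ZMod 2)
    (Zb := fun k : Fin 2 × ι => Fin (b k.1 k.2) → ZMod 2)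
    (pnF p n) (pnF_nonneg p hp n) (pnF_sum p hp1 n) Un Sn R
    (by
      intro j hj
      have : r j = 0 := by simpa [R] using hj
      simp [this])
    (TyF p U S d n) τ (fun A => by positivity) qs
    (fun s => (qs_pnF p n S s).symm)
    (fun s => Finset.prod_pos fun k _ => hS _)
    (by
      intro ω hω A _ _
      rw [hqs0]
      have h1 := (hTMS ω hω A).2
      have h2 := (hTMS ω hω ∅).1
      calc _ ≤ (2:ℝ) ^ (-(n * (HMS p U S A - d))) := h1
        _ = (2:ℝ) ^ (-(n * (HMS p U S ∅ + d))) * τ A := by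
          simp only [τ]
          rw [← Real.rpow_add (by norm_num)]
          congr 1; ring
        _ ≤ _ := mul_le_mul_of_nonneg_right h2 (by positivity))
    ε hε 𝒯 D
    (fun B ω hω => (hTM ω hω B).1)
    (by
      intro B u v huv h
      have : qM (pnF p n) Un B v = qM (pnF p n) Un B u := by
        unfold qM
        refine Finset.sum_congr rfl fun ω _ => ?_
        congr 1
        apply propext
        exact forall₂_congr fun i hi => by rw [huv i hi]
      simp only [D, this]
      exact h)
    N (fun B J => by positivity)
    (by
      intro B J hJ _ ω hω F hF
      have h1 := sum_qM_fiber (pnF p n) (pnF_nonneg p hp n) Un B J hJ (fun i => Un i ω) F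
        (fun v hv => (hF v hv).1)
      have h2 : (F.card : ℝ) * (2:ℝ) ^ (-(n * (HM p U B + d))) ≤ ∑ v ∈ F, qM (pnF p n) Un B v := by
        rw [← nsmul_eq_mul]
        exact Finset.card_nsmul_le_sum _ _ _ fun v hv => (hF v hv).2
      have h3 := (hTM ω hω (B \ J)).2
      have h4 : (F.card : ℝ) * (2:ℝ) ^ (-(n * (HM p U B + d))) ≤
        N B J * (2:ℝ) ^ (-(n * (HM p U B + d))) := by
        refine (h2.trans (h1.trans h3)).trans (le_of_eq ?_)
        simp only [N]
        rw [← Real.rpow_add (by norm_num)]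
        congr 1; ring
      exact le_of_mul_le_mul_right h4 (by positivity))
  refine ⟨b, hB, enc, G, hb_le, ?_, ?_, ?_⟩
  · refine le_trans hG1 (le_trans ?_ (hn₁ n hnn1).le)
    refine add_le_add (add_le_add (hK n hnpos) ?_) ?_
    · have : ∑ A ∈ R.powerset.filter (fun A => A.Nonempty),
          (∏ j ∈ A, (Fintype.card (Fin (r j) → ZMod 2) : ℝ)) * τ A ≤ c1 * (2:ℝ) ^ (-(n * d)) := by
        calc _ ≤ ∑ A ∈ R.powerset.filter (fun A => A.Nonempty), (2:ℝ) ^ (-(n * d)) := by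
              refine Finset.sum_le_sum fun A hA => ?_
              rw [Finset.mem_filter, Finset.mem_powerset] at hA
              rw [prod_card_bits, ← Real.rpow_add (by norm_num)]
              apply Real.rpow_le_rpow_of_exponent_le (by norm_num)
              have h1 : ∑ j ∈ A, (r j : ℝ) ≤ ∑ j ∈ A, n * (Hi j - γr j - 3 * d) :=
                Finset.sum_le_sum fun j hj => hr_le j (hA.1 hj)
              rw [← Finset.mul_sum] at h1
              have h2 : ∑ j ∈ A, (Hi j - γr j - 3 * d) ≤ HMS p U S A - HMS p U S ∅ - 3 * d := by
                have hc := cov A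
                have h3 : 3 * d ≤ ∑ j ∈ A, 3 * d := by
                  rw [Finset.sum_const, nsmul_eq_mul]
                  have : (1:ℝ) ≤ A.card := by exact_mod_cast hA.2.card_pos
                  nlinarith
                simp only [Finset.sum_sub_distrib] at *
                linarith
              have h4 := mul_le_mul_of_nonneg_left h2 hnR.le
              nlinarith
          _ = ((R.powerset.filter (fun A => A.Nonempty)).card : ℝ) * (2:ℝ) ^ (-(n * d)) := by
              rw [Finset.sum_const, nsmul_eq_mul]
          _ ≤ _ := by
              apply mul_le_mul_of_nonneg_right _ (by positivity)
              rw [hc1]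
              exact_mod_cast Finset.card_le_card (Finset.subset_univ _)
      gcongr
    · calc _ ≤ ∑ T ∈ 𝒯, c1 * (2:ℝ) ^ (-(n * d)) := by
            refine Finset.sum_le_sum fun T hT => ?_
            calc _ ≤ ∑ A ∈ T.1.powerset.filter (fun A => A.Nonempty), (2:ℝ) ^ (-(n * d)) := by
                  refine Finset.sum_le_sum fun J hJ => ?_
                  rw [Finset.mem_filter, Finset.mem_powerset] at hJ
                  rw [Finset.prod_mul_distrib, Finset.prod_inv_distrib, Finset.prod_inv_distrib,
                    prod_card_bits, prod_card_bits J (fun j => b T.2 j),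
                    ← Real.rpow_neg (by norm_num), ← Real.rpow_neg (by norm_num),
                    ← Real.rpow_add (by norm_num), ← Real.rpow_add (by norm_num)]
                  apply Real.rpow_le_rpow_of_exponent_le (by norm_num)
                  have h1 : ∑ j ∈ J, (n * (Hi j - (γr j - ρ T.2 j)) + 4 * (n * d)) ≤
                      ∑ j ∈ J, ((r j : ℝ) + b T.2 j) := by
                    refine Finset.sum_le_sum fun j _ => ?_
                    have := hr_ge j
                    have := hb_ge T.2 j
                    linarith
                  rw [Finset.sum_add_distrib, ← Finset.mul_sum, Finset.sum_add_distrib,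
                    Finset.sum_sub_distrib, Finset.sum_const, nsmul_eq_mul] at h1
                  have h2 := mul_le_mul_of_nonneg_left (pack T hT J hJ.1) hnR.le
                  have h3 : 4 * (n * d) ≤ J.card * (4 * (n * d)) := by
                    have : (1:ℝ) ≤ J.card := by exact_mod_cast hJ.2.card_pos
                    nlinarith
                  nlinarith
              _ = ((T.1.powerset.filter (fun A => A.Nonempty)).card : ℝ) * (2:ℝ) ^ (-(n * d)) := by
                  rw [Finset.sum_const, nsmul_eq_mul]
              _ ≤ _ := by
                  apply mul_le_mul_of_nonneg_right _ (by positivity)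
                  rw [hc1]
                  exact_mod_cast Finset.card_le_card (Finset.subset_univ _)
        _ = _ := by
            rw [Finset.sum_const, nsmul_eq_mul, hc2]; ring
  · intro s hs k
    obtain ⟨h1, h2⟩ := hG2 s hs
    rw [mem_TyF] at h1
    exact ⟨h1.1 k, congrFun h2 k⟩
  · intro s hs s' hs' T hT h j hj k
    exact congrFun (hG3 s hs s' hs' T hT h j hj) k

end NLetterThm


/-! ### The block code obtained from a point of the inner bound -/

section BlockCode

lemma HM_map {Ω W : Type} [Fintype Ω] [DecidableEq W] {M M' : ℕ} (e : Fin M ↪ Fin M')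
    (p : Ω → ℝ) (X : Fin M' → Ω → W) (U : Fin M → Ω → W) (hU : ∀ i, U i = X (e i))
    (A : Finset (Fin M)) : HM p U A = HM p X (A.map e) := by
  unfold HM qM
  simp [hU]

lemma pack_of_RstarMD {Ω γ τ : Type} [Fintype Ω] [Fintype γ] [DecidableEq γ] [Fintype τ]
    [DecidableEq τ] {M M' : ℕ} (e : Fin M ↪ Fin M')
    (p : Ω → ℝ) (S : Ω → τ) (X : Fin M' → Ω → γ) (U : Fin M → Ω → γ) (hU : ∀ i, U i = X (e i))
    (R R' : Fin M → ℝ) (α γr : Fin M' → ℝ) (hR : ∀ i, R i = α (e i)) (hR' : ∀ i, R' i = γr (e i))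
    (recs : Finset (Finset (Fin M)))
    (h : RstarMD p S U recs R R') (B : Finset (Fin M)) (hB : B ∈ recs) :
    ∀ J ⊆ B.map e, ∑ j ∈ J, (γr j - α j) ≤
      ∑ j ∈ J, ent p (X j) - (HM p X (B.map e) - HM p X (B.map e \ J)) := by
  intro J hJ
  obtain ⟨J', hJ', rfl⟩ := Finset.subset_map_iff.1 hJ
  have := h.2.2 B hB J' hJ'
  unfold cjEnt at this
  rw [jEnt_eq, jEnt_eq, Finset.union_sdiff_of_subset hJ', HM_map e p X U hU, HM_map e p X U hU,
    Finset.map_sdiff] at this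
  rw [Finset.sum_map, Finset.sum_map]
  simpa [hU, hR, hR'] using this

lemma cov_of_RstarMD {Ω γ τ : Type} [Fintype Ω] [Fintype γ] [DecidableEq γ] [Fintype τ]
    [DecidableEq τ] {M : ℕ} (p : Ω → ℝ) (S : Ω → τ) (X : Fin M → Ω → γ)
    (R R' : Fin M → ℝ) (recs : Finset (Finset (Fin M)))
    (h : RstarMD p S X recs R R') (A : Finset (Fin M)) :
    ∑ j ∈ A, ent p (X j) - (HMS p X S A - HMS p X S ∅) ≤ ∑ j ∈ A, R' j := by
  have := h.2.1 A
  unfold jEntCondS at this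
  rw [jEntS_eq, entS_eq p X S] at this
  exact this

theorem blockcode (t : ℕ) (ab : ℝ × ℝ) (hab : RinMem t ab) :
    ∃ α β : Fin 5 → ℝ, (∀ i, 0 ≤ α i) ∧ (∀ i, 0 ≤ β i) ∧
      2 * t * ab.1 ≥ α 0 + α 1 + α 2 + α 3 + α 4 ∧
      4 * t * ab.2 ≥ 2 * β 0 + β 1 + β 2 + β 3 + β 4 ∧
      ∀ δ ε : ℝ, 0 < δ → 0 < ε → ∃ n₀ : ℕ, ∀ n ≥ n₀, ∃ (a b : Fin 5 → ℕ)
        (hA : ∀ i, (Fin n → Msg t × Msg t) → (Fin (a i) → ZMod 2))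
        (hB : ∀ i, (Fin n → Msg t × Msg t) → (Fin (b i) → ZMod 2))
        (G : Finset (Fin n → Msg t × Msg t)),
        (∀ i, (a i : ℝ) ≤ n * (α i + δ)) ∧ (∀ i, (b i : ℝ) ≤ n * (β i + δ)) ∧
        ((Gᶜ.card : ℝ) ≤ ε * ((2:ℝ) ^ (2 * t)) ^ n) ∧
        ∀ s ∈ G, ∀ s' ∈ G,
          (hA 0 s = hA 0 s' → hA 1 s = hA 1 s' → hA 2 s = hA 2 s' →
            hB 0 s = hB 0 s' ∧ hB 1 s = hB 1 s' ∧ hB 2 s = hB 2 s') ∧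
          (hA 3 s = hA 3 s' → hA 4 s = hA 4 s' → hB 3 s = hB 3 s' ∧ hB 4 s = hB 4 s') ∧
          (hB 0 s = hB 0 s' → hB 1 s = hB 1 s' → hB 3 s = hB 3 s' → ∀ k, (s k).1 = (s' k).1) ∧
          (hB 0 s = hB 0 s' → hB 2 s = hB 2 s' → hB 4 s = hB 4 s' → ∀ k, (s k).1 = (s' k).1) ∧
          (hB 0 s = hB 0 s' → hB 1 s = hB 1 s' → hB 4 s = hB 4 s' → ∀ k, (s k).2 = (s' k).2) ∧
          (hB 0 s = hB 0 s' → hB 2 s = hB 2 s' → hB 3 s = hB 3 s' → ∀ k, (s k).2 = (s' k).2) := by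
  classical
  obtain ⟨S, ⟨f11, f12, f21, f22, hf⟩, β, γr, hMD, α, hα, hc1, hc1', hc2, hc2', hab1, hab2⟩ := hab
  refine ⟨α, β, fun i => (hα i).1, fun i => (hMD.1 i).1, hab1, hab2, ?_⟩
  intro δ ε hδ hε
  set C1 : Prop := (γr 0 - β 0) + (γr 1 - β 1) + (γr 2 - β 2) <
            ent S.p (S.X 0) + ent S.p (S.X 1) + ent S.p (S.X 2)
              - jEnt S.p S.X {0,1,2} with hC1
  set C2 : Prop := (γr 3 - β 3) + (γr 4 - β 4) < mi S.p (S.X 3) (S.X 4) with hC2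
  let 𝒯 : Finset (Finset (Fin 5) × Fin 2) := recs5.image (fun B => (B, 0)) ∪
    ((if C1 then {({0,1,2}, 1)} else ∅) ∪ (if C2 then {({3,4}, 1)} else ∅))
  let ρ : Fin 2 → Fin 5 → ℝ := ![β, α]
  let sel : Fin 5 → Fin 2 := fun i =>
    if i = 0 ∨ i = 1 ∨ i = 2 then (if C1 then 1 else 0) else (if C2 then 1 else 0)
  have hsel : ∀ i, ρ (sel i) i = α i := by
    intro i
    by_cases h1 : C1 <;> by_cases h2 : C2 <;> fin_cases i <;> simp [ρ, sel, h1, h2]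
    all_goals first
      | exact (hc1' h1).1.symm
      | exact (hc1' h1).2.1.symm
      | exact (hc1' h1).2.2.symm
      | exact (hc2' h2).1.symm
      | exact (hc2' h2).2.symm
  have hu : ∀ v, (∑ ω, if S.V ω = v then S.p ω else 0) = ((2:ℝ)^(2*t))⁻¹ := S.V_unif
  obtain ⟨n₀, hn₀⟩ := nletter S.p S.p_nonneg S.p_sum S.X S.V
    (by intro v; rw [hu]; positivity)
    (fun j => ent S.p (S.X j)) γr ρ
    (by
      intro c j
      fin_cases c
      · exact (hMD.1 j).1
      · exact (hα j).1)
    𝒯 (cov_of_RstarMD S.p S.V S.X β γr recs5 hMD)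
    (by
      intro T hT
      simp only [𝒯, Finset.mem_union, Finset.mem_image] at hT
      rcases hT with ⟨B, hB, rfl⟩ | hT | hT
      · have := pack_of_RstarMD (Function.Embedding.refl _) S.p S.V S.X S.X (fun i => rfl) β γr β γr
          (fun i => rfl) (fun i => rfl) recs5 hMD B hB
        rw [Finset.map_refl] at this
        exact this
      · split_ifs at hT with h
        · rw [Finset.mem_singleton] at hT
          subst hT
          let e : Fin 3 ↪ Fin 5 := ⟨![0,1,2], by decide⟩
          have := pack_of_RstarMD e S.p S.V S.X _ (fun i => by fin_cases i <;> rfl) _ _ α γr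
            (fun i => by fin_cases i <;> rfl) (fun i => by fin_cases i <;> rfl) _ (hc1 h)
            Finset.univ (Finset.mem_singleton_self _)
          have he : (Finset.univ : Finset (Fin 3)).map e = {0,1,2} := by decide
          rw [he] at this
          exact this
        · simp at hT
      · split_ifs at hT with h
        · rw [Finset.mem_singleton] at hT
          subst hT
          let e : Fin 2 ↪ Fin 5 := ⟨![3,4], by decide⟩
          have := pack_of_RstarMD e S.p S.V S.X _ (fun i => by fin_cases i <;> rfl) _ _ α γr
            (fun i => by fin_cases i <;> rfl) (fun i => by fin_cases i <;> rfl) _ (hc2 h)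
            Finset.univ (Finset.mem_singleton_self _)
          have he : (Finset.univ : Finset (Fin 2)).map e = {3,4} := by decide
          rw [he] at this
          exact this
        · simp at hT)
    δ ε hδ hε
  refine ⟨n₀, fun n hn => ?_⟩
  obtain ⟨b, hB, enc, G, hb, hG1, hG2, hG3⟩ := hn₀ n hn
  refine ⟨fun i => b (sel i) i, fun i => b 0 i,
    fun i s => hB (sel i, i) (fun k => S.X i (enc s k)),
    fun i s => hB (0, i) (fun k => S.X i (enc s k)), G, ?_, ?_, ?_, ?_⟩
  · intro i
    have := hb (sel i) i
    rwa [hsel i] at this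
  · intro i
    exact hb 0 i
  · simp only [hu] at hG1
    rw [Finset.sum_const, nsmul_eq_mul, Finset.prod_const, Finset.card_univ, Fintype.card_fin,
      inv_pow, ← div_eq_mul_inv, div_le_iff₀ (by positivity)] at hG1
    exact hG1
  · intro s hs s' hs'
    have hV : ∀ s ∈ G, ∀ k, s k = S.V (enc s k) := fun s hs k => ((hG2 s hs k).2).symm
    have hT0 : ∀ i j l : Fin 5, ({i, j, l} : Finset (Fin 5)) ∈ recs5 →
        hB (0, i) (fun k => S.X i (enc s k)) = hB (0, i) (fun k => S.X i (enc s' k)) →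
        hB (0, j) (fun k => S.X j (enc s k)) = hB (0, j) (fun k => S.X j (enc s' k)) →
        hB (0, l) (fun k => S.X l (enc s k)) = hB (0, l) (fun k => S.X l (enc s' k)) →
        ∀ k, S.X i (enc s k) = S.X i (enc s' k) ∧ S.X j (enc s k) = S.X j (enc s' k) ∧
          S.X l (enc s k) = S.X l (enc s' k) := by
      intro i j l hm h1 h2 h3 k
      have hT : (({i, j, l} : Finset (Fin 5)), (0 : Fin 2)) ∈ 𝒯 :=
        Finset.mem_union_left _ (Finset.mem_image_of_mem _ hm)
      have := hG3 s hs s' hs' _ hT (by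
        intro x hx
        simp only [Finset.mem_insert, Finset.mem_singleton] at hx
        rcases hx with rfl | rfl | rfl
        exacts [h1, h2, h3])
      exact ⟨this i (by simp) k, this j (by simp) k, this l (by simp) k⟩
    refine ⟨?_, ?_, ?_, ?_, ?_, ?_⟩
    · by_cases h : C1
      · have e0 : sel 0 = 1 := by simp [sel, h]
        have e1 : sel 1 = 1 := by simp [sel, h]
        have e2 : sel 2 = 1 := by simp [sel, h]
        beta_reduce
        rw [e0, e1, e2]
        intro h0 h1 h2
        have hT : (({0, 1, 2} : Finset (Fin 5)), (1 : Fin 2)) ∈ 𝒯 := by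
          simp [𝒯, h]
        have := hG3 s hs s' hs' _ hT (by
          intro x hx
          simp only [Finset.mem_insert, Finset.mem_singleton] at hx
          rcases hx with rfl | rfl | rfl
          exacts [h0, h1, h2])
        refine ⟨?_, ?_, ?_⟩
        · exact congrArg _ (funext (this 0 (by simp)))
        · exact congrArg _ (funext (this 1 (by simp)))
        · exact congrArg _ (funext (this 2 (by simp)))
      · have e0 : sel 0 = 0 := by simp [sel, h]
        have e1 : sel 1 = 0 := by simp [sel, h]
        have e2 : sel 2 = 0 := by simp [sel, h]
        beta_reduce
        rw [e0, e1, e2]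
        exact fun h0 h1 h2 => ⟨h0, h1, h2⟩
    · by_cases h : C2
      · have e0 : sel 3 = 1 := by simp [sel, h]
        have e1 : sel 4 = 1 := by simp [sel, h]
        beta_reduce
        rw [e0, e1]
        intro h0 h1
        have hT : (({3, 4} : Finset (Fin 5)), (1 : Fin 2)) ∈ 𝒯 := by
          simp [𝒯, h]
        have := hG3 s hs s' hs' _ hT (by
          intro x hx
          simp only [Finset.mem_insert, Finset.mem_singleton] at hx
          rcases hx with rfl | rfl
          exacts [h0, h1])
        refine ⟨?_, ?_⟩
        · exact congrArg _ (funext (this 3 (by simp)))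
        · exact congrArg _ (funext (this 4 (by simp)))
      · have e0 : sel 3 = 0 := by simp [sel, h]
        have e1 : sel 4 = 0 := by simp [sel, h]
        beta_reduce
        rw [e0, e1]
        exact fun h0 h1 => ⟨h0, h1⟩
    · intro h0 h1 h2 k
      obtain ⟨g0, g1, g2⟩ := hT0 0 1 3 (by decide) h0 h1 h2 k
      rw [hV s hs, hV s' hs', (hf _ (hG2 s hs k).1).1, (hf _ (hG2 s' hs' k).1).1, g0, g1, g2]
    · intro h0 h1 h2 k
      obtain ⟨g0, g1, g2⟩ := hT0 0 2 4 (by decide) h0 h1 h2 k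
      rw [hV s hs, hV s' hs', (hf _ (hG2 s hs k).1).2.1, (hf _ (hG2 s' hs' k).1).2.1, g0, g1, g2]
    · intro h0 h1 h2 k
      obtain ⟨g0, g1, g2⟩ := hT0 0 1 4 (by decide) h0 h1 h2 k
      rw [hV s hs, hV s' hs', (hf _ (hG2 s hs k).1).2.2.1, (hf _ (hG2 s' hs' k).1).2.2.1,
        g0, g1, g2]
    · intro h0 h1 h2 k
      obtain ⟨g0, g1, g2⟩ := hT0 0 2 3 (by decide) h0 h1 h2 k
      rw [hV s hs, hV s' hs', (hf _ (hG2 s hs k).1).2.2.2, (hf _ (hG2 s' hs' k).1).2.2.2,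
        g0, g1, g2]

end BlockCode


/-! ### Assembling the PIR code -/

section Assembly

lemma stdP_nonneg (k : Fin 2) (qq : Fin 2 × Fin 2) : 0 ≤ stdP k qq := by
  unfold stdP
  split_ifs <;> norm_num

lemma stdP_sum (k : Fin 2) : ∑ qq, stdP k qq = 1 := by
  fin_cases k <;> simp [stdP, Fintype.sum_prod_type] <;> norm_num

lemma stdP_marg (n q k : Fin 2) :
    (∑ qq : Fin 2 × Fin 2, if (if n = 0 then qq.1 else qq.2) = q then stdP k qq else 0) = 1/2 := by
  fin_cases n <;> fin_cases q <;> fin_cases k <;> simp [stdP, Fintype.sum_prod_type]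

lemma stdP_ne (k : Fin 2) (qq : Fin 2 × Fin 2) (h : stdP k qq ≠ 0) :
    k = if qq.1 = qq.2 then 0 else 1 := by
  by_contra hne
  apply h
  unfold stdP
  rw [if_neg]
  rintro (⟨h1, h2⟩ | ⟨h1, h2⟩)
  · exact hne (by rw [if_pos h2]; exact h1)
  · exact hne (by rw [if_neg h2]; exact h1)

theorem mkCode (L : ℕ) (m : ℕ) (l : Fin 2 → ℕ) (T : Type) [Fintype T] (hT : Fintype.card T = 2 ^ m)
    (A : Fin 2 → Type) [∀ q, Fintype (A q)] (hA : ∀ q, Fintype.card (A q) = 2 ^ (l q))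
    (st : Fin 2 → Msg L × Msg L → T) (an : Fin 2 → ∀ q, Msg L × Msg L → A q)
    (G : Finset (Msg L × Msg L))
    (hst : ∀ n q, ∀ w ∈ G, ∀ w' ∈ G, st n w = st n w' → an n q w = an n q w')
    (hdec : ∀ q₁ q₂, ∀ w ∈ G, ∀ w' ∈ G, an 0 q₁ w = an 0 q₁ w' → an 1 q₂ w = an 1 q₂ w' →
      target (if q₁ = q₂ then 0 else 1) w = target (if q₁ = q₂ then 0 else 1) w') :
    ∃ C : CodeBase L (Fin 2), C.P = stdP ∧ (∀ n, C.stor n = m) ∧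
      (∀ n, betaRate C n = ((l 0 : ℝ) + l 1) / 2) ∧
      Pe C ≤ (Gᶜ.card : ℝ) * ((2:ℝ)^(2*L))⁻¹ := by
  classical
  let eT : T ≃ (Fin m → ZMod 2) := Fintype.equivOfCardEq (by rw [hT]; simp [ZMod.card])
  let eA : ∀ q, A q ≃ (Fin (l q) → ZMod 2) := fun q =>
    Fintype.equivOfCardEq (by rw [hA]; simp [ZMod.card])
  let ansF : ∀ (n q : Fin 2), (Fin m → ZMod 2) → (Fin (l q) → ZMod 2) := fun n q s =>
    if h : ∃ w ∈ G, eT (st n w) = s then eA q (an n q h.choose) else 0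
  let decF : ∀ (k q₁ q₂ : Fin 2), (Fin (l q₁) → ZMod 2) → (Fin (l q₂) → ZMod 2) → Msg L :=
    fun k q₁ q₂ a₁ a₂ =>
      if h : ∃ w ∈ G, eA q₁ (an 0 q₁ w) = a₁ ∧ eA q₂ (an 1 q₂ w) = a₂ then target k h.choose else 0
  let C : CodeBase L (Fin 2) :=
    { P := stdP
      P_nonneg := stdP_nonneg
      P_sum := stdP_sum
      stor := fun _ => m
      phi := fun n w => eT (st n w)
      blen := fun _ q => l q
      ans := ansF
      dec := decF
      privacy := by
        intro n q s
        rw [stdP_marg, stdP_marg] }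
  have hans : ∀ n q, ∀ w ∈ G, ansF n q (eT (st n w)) = eA q (an n q w) := by
    intro n q w hw
    have h : ∃ w' ∈ G, eT (st n w') = eT (st n w) := ⟨w, hw, rfl⟩
    simp only [ansF]
    rw [dif_pos h]
    congr 1
    exact hst n q _ h.choose_spec.1 _ hw (eT.injective h.choose_spec.2)
  have hret : ∀ k qq, stdP k qq ≠ 0 → ∀ w ∈ G, retrieved C k qq w = target k w := by
    intro k qq hk w hw
    show decF k qq.1 qq.2 (ansF 0 qq.1 (eT (st 0 w))) (ansF 1 qq.2 (eT (st 1 w))) = target k w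
    rw [hans _ _ w hw, hans _ _ w hw]
    have h : ∃ w' ∈ G, eA qq.1 (an 0 qq.1 w') = eA qq.1 (an 0 qq.1 w) ∧
      eA qq.2 (an 1 qq.2 w') = eA qq.2 (an 1 qq.2 w) := ⟨w, hw, rfl, rfl⟩
    simp only [decF]
    rw [dif_pos h, stdP_ne k qq hk]
    exact hdec _ _ _ h.choose_spec.1 _ hw ((eA _).injective h.choose_spec.2.1)
      ((eA _).injective h.choose_spec.2.2)
  refine ⟨C, rfl, fun _ => rfl, ?_, ?_⟩
  · intro n
    show ∑ qq : Fin 2 × Fin 2, stdP 0 qq * ((l (if n = 0 then qq.1 else qq.2) : ℕ) : ℝ) = _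
    fin_cases n <;> simp [stdP, Fintype.sum_prod_type] <;> ring
  · have hc : (0:ℝ) ≤ ((2:ℝ)^(2*L))⁻¹ := by positivity
    have hk : ∀ k w, ∑ qq : Fin 2 × Fin 2, ((2:ℝ)^(2*L))⁻¹ * C.P k qq *
        (if retrieved C k qq w ≠ target k w then 1 else 0) ≤
        if w ∈ Gᶜ then ((2:ℝ)^(2*L))⁻¹ else 0 := by
      intro k w
      by_cases hw : w ∈ G
      · rw [if_neg (by simpa using hw)]
        apply le_of_eq
        refine Finset.sum_eq_zero fun qq _ => ?_
        by_cases h0 : stdP k qq = 0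
        · have : C.P k qq = 0 := h0
          rw [this]; ring
        · rw [if_neg (not_not.2 (hret k qq h0 w hw))]; ring
      · rw [if_pos (by simpa using hw)]
        calc _ ≤ ∑ qq : Fin 2 × Fin 2, ((2:ℝ)^(2*L))⁻¹ * stdP k qq := by
              refine Finset.sum_le_sum fun qq _ => ?_
              have h0 : 0 ≤ ((2:ℝ)^(2*L))⁻¹ * stdP k qq := mul_nonneg hc (stdP_nonneg k qq)
              show ((2:ℝ)^(2*L))⁻¹ * stdP k qq * _ ≤ _
              split_ifs <;> linarith
          _ = _ := by rw [← Finset.mul_sum, stdP_sum, mul_one]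
    have hk2 : ∀ k : Fin 2, ∑ w : Msg L × Msg L, ∑ qq : Fin 2 × Fin 2, ((2:ℝ)^(2*L))⁻¹ * C.P k qq *
        (if retrieved C k qq w ≠ target k w then 1 else 0) ≤ (Gᶜ.card : ℝ) * ((2:ℝ)^(2*L))⁻¹ := by
      intro k
      refine (Finset.sum_le_sum fun w _ => hk k w).trans ?_
      rw [Finset.sum_ite_mem, Finset.univ_inter, Finset.sum_const, nsmul_eq_mul]
    unfold Pe
    rw [Fin.sum_univ_two]
    have h0 := hk2 0
    have h1 := hk2 1
    linarith

/-- The `c`-th block of the messages. -/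
def blkF {L n t r : ℕ} (e : Fin L ≃ (Fin 2 × Fin n × Fin t) ⊕ Fin r) (c : Fin 2)
    (w : Msg L × Msg L) : Fin n → Msg t × Msg t :=
  fun k => (fun i => w.1 (e.symm (Sum.inl (c, k, i))), fun i => w.2 (e.symm (Sum.inl (c, k, i))))

/-- The symbols of the messages not contained in any block. -/
def loF {L n t r : ℕ} (e : Fin L ≃ (Fin 2 × Fin n × Fin t) ⊕ Fin r)
    (w : Msg L × Msg L) : Msg r × Msg r :=
  (fun i => w.1 (e.symm (Sum.inr i)), fun i => w.2 (e.symm (Sum.inr i)))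

lemma fst_ext {L n t r : ℕ} (e : Fin L ≃ (Fin 2 × Fin n × Fin t) ⊕ Fin r) (w w' : Msg L × Msg L)
    (h0 : ∀ k, (blkF e 0 w k).1 = (blkF e 0 w' k).1)
    (h1 : ∀ k, (blkF e 1 w k).1 = (blkF e 1 w' k).1) (h : loF e w = loF e w') : w.1 = w'.1 := by
  funext i
  obtain ⟨x, rfl⟩ := e.symm.surjective i
  rcases x with ⟨c, k, j⟩ | j
  · fin_cases c
    · exact congrFun (h0 k) j
    · exact congrFun (h1 k) j
  · exact congrFun (congrArg Prod.fst h) j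

lemma snd_ext {L n t r : ℕ} (e : Fin L ≃ (Fin 2 × Fin n × Fin t) ⊕ Fin r) (w w' : Msg L × Msg L)
    (h0 : ∀ k, (blkF e 0 w k).2 = (blkF e 0 w' k).2)
    (h1 : ∀ k, (blkF e 1 w k).2 = (blkF e 1 w' k).2) (h : loF e w = loF e w') : w.2 = w'.2 := by
  funext i
  obtain ⟨x, rfl⟩ := e.symm.surjective i
  rcases x with ⟨c, k, j⟩ | j
  · fin_cases c
    · exact congrFun (h0 k) j
    · exact congrFun (h1 k) j
  · exact congrFun (congrArg Prod.snd h) j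

lemma card_bad {L n t r : ℕ} (e : Fin L ≃ (Fin 2 × Fin n × Fin t) ⊕ Fin r)
    (G : Finset (Fin n → Msg t × Msg t)) (c : Fin 2) :
    ((Finset.univ.filter (fun w : Msg L × Msg L => blkF e c w ∉ G)).card : ℝ) ≤
      Gᶜ.card * (((2:ℝ) ^ (2 * t)) ^ n * 2 ^ (2 * r)) := by
  have h : (Finset.univ.filter (fun w : Msg L × Msg L => blkF e c w ∉ G)).card ≤
      (Gᶜ ×ˢ ((Finset.univ : Finset (Fin n → Msg t × Msg t)) ×ˢ
        (Finset.univ : Finset (Msg r × Msg r)))).card := by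
    apply Finset.card_le_card_of_injOn (fun w => (blkF e c w, blkF e (c + 1) w, loF e w))
    · intro w hw
      simpa using hw
    · intro w _ w' _ hww
      simp only [Prod.mk.injEq] at hww
      obtain ⟨h1, h2, h3⟩ := hww
      have hb : blkF e 0 w = blkF e 0 w' ∧ blkF e 1 w = blkF e 1 w' := by
        fin_cases c
        · exact ⟨h1, h2⟩
        · exact ⟨h2, h1⟩
      exact Prod.ext (fst_ext e w w' (fun k => by rw [hb.1]) (fun k => by rw [hb.2]) h3)
        (snd_ext e w w' (fun k => by rw [hb.1]) (fun k => by rw [hb.2]) h3)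
  refine (Nat.cast_le.2 h).trans (le_of_eq ?_)
  rw [Finset.card_product, Finset.card_product]
  simp only [Finset.card_univ, Fintype.card_pi, Fintype.card_prod, ZMod.card, Finset.prod_const,
    Fintype.card_fin]
  push_cast
  ring

end Assembly



/-- For every integer `t ≥ 1`, every `(ᾱ, β̄) ∈ R^{(t)}_in`, and every
`ε > 0`, for all sufficiently large `L` there exists an
`(L, L(ᾱ+ε), L(ᾱ+ε), L(β̄+ε), L(β̄+ε))` ε-error (2,2) PIR code whose query distribution
for message 1 is uniform on `{(1,1),(2,2)}` and for message 2 is uniform on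
`{(1,2),(2,1)}`. -/
theorem statement3 (t : ℕ) (ht : 1 ≤ t) (ab : ℝ × ℝ) (hab : RinMem t ab)
    (ε : ℝ) (hε : 0 < ε) :
    ∃ L₀ : ℕ, ∀ L ≥ L₀, ∃ C : CodeBase L (Fin 2),
      C.P = stdP ∧
      Pe C ≤ ε ∧
      (C.stor 0 : ℝ) ≤ L * (ab.1 + ε) ∧ (C.stor 1 : ℝ) ≤ L * (ab.1 + ε) ∧
      betaRate C 0 ≤ L * (ab.2 + ε) ∧ betaRate C 1 ≤ L * (ab.2 + ε) := by
  classical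
  obtain ⟨α, β, hα, hβ, hab1, hab2, hblk⟩ := blockcode t ab hab
  obtain ⟨n₀, hn₀⟩ := hblk (ε / 10) (ε / 2) (by positivity) (by positivity)
  obtain ⟨L₁, hL₁⟩ := exists_nat_gt (8 * t / ε)
  refine ⟨max (2 * t * n₀) L₁, fun L hL => ?_⟩
  set n := L / (2 * t) with hn
  set r := L % (2 * t) with hr
  have hLn : 2 * t * n + r = L := Nat.div_add_mod L (2 * t)
  have hrt : r < 2 * t := Nat.mod_lt _ (by omega)
  have hnn : n₀ ≤ n := by
    rw [hn, Nat.le_div_iff_mul_le (by omega), mul_comm]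
    exact (le_max_left _ _).trans hL
  have hLt : 8 * (t:ℝ) < L * ε := by
    have : 8 * (t:ℝ) / ε < L :=
      lt_of_lt_of_le hL₁ (by exact_mod_cast (le_max_right _ _).trans hL)
    rwa [div_lt_iff₀ hε] at this
  let e : Fin L ≃ (Fin 2 × Fin n × Fin t) ⊕ Fin r := Fintype.equivOfCardEq (by
    simp only [Fintype.card_fin, Fintype.card_sum, Fintype.card_prod]
    rw [← hLn]; ring)
  obtain ⟨a, b, hA, hB, G, ha, hb, hG, hdet⟩ := hn₀ n hnn
  let xi : Fin 2 → Fin 5 := ![1, 2]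
  let yi : Fin 2 → Fin 5 := ![3, 4]
  let G' : Finset (Msg L × Msg L) :=
    Finset.univ.filter (fun w => blkF e 0 w ∈ G ∧ blkF e 1 w ∈ G)
  have hG'm : ∀ w ∈ G', ∀ c, blkF e c w ∈ G := by
    intro w hw c
    have : blkF e 0 w ∈ G ∧ blkF e 1 w ∈ G := by simpa [G'] using hw
    fin_cases c
    exacts [this.1, this.2]
  obtain ⟨C, hCP, hCs, hCb, hCe⟩ := mkCode L (a 0 + a 1 + a 2 + a 3 + a 4 + 2 * r)
    (fun q => b 0 + b (xi q) + b (yi q) + 2 * r)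
    (((Fin (a 0) → ZMod 2) × (Fin (a 1) → ZMod 2) × (Fin (a 2) → ZMod 2) ×
      (Fin (a 3) → ZMod 2) × (Fin (a 4) → ZMod 2)) × (Msg r × Msg r))
    (by simp [ZMod.card]; ring)
    (fun q => ((Fin (b 0) → ZMod 2) × (Fin (b (xi q)) → ZMod 2) × (Fin (b (yi q)) → ZMod 2)) ×
      (Msg r × Msg r))
    (by intro q; simp [ZMod.card]; ring)
    (fun m w => ((hA 0 (blkF e m w), hA 1 (blkF e m w), hA 2 (blkF e m w),
      hA 3 (blkF e (m + 1) w), hA 4 (blkF e (m + 1) w)), loF e w))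
    (fun m q w => ((hB 0 (blkF e m w), hB (xi q) (blkF e m w), hB (yi q) (blkF e (m + 1) w)),
      loF e w))
    G'
    (by
      intro m q w hw w' hw' h
      simp only [Prod.mk.injEq] at h
      obtain ⟨⟨h0, h1, h2, h3, h4⟩, h5⟩ := h
      obtain ⟨g0, g1, g2⟩ := (hdet _ (hG'm w hw m) _ (hG'm w' hw' m)).1 h0 h1 h2
      obtain ⟨g3, g4⟩ := (hdet _ (hG'm w hw (m + 1)) _ (hG'm w' hw' (m + 1))).2.1 h3 h4
      refine Prod.ext (Prod.ext g0 (Prod.ext ?_ ?_)) h5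
      · fin_cases q
        exacts [g1, g2]
      · fin_cases q
        exacts [g3, g4])
    (by
      intro q₁ q₂ w hw w' hw' h1 h2
      simp only [Prod.mk.injEq] at h1 h2
      obtain ⟨⟨x0, x1, x2⟩, x3⟩ := h1
      obtain ⟨⟨y0, y1, y2⟩, y3⟩ := h2
      have d0 := hdet _ (hG'm w hw 0) _ (hG'm w' hw' 0)
      have d1 := hdet _ (hG'm w hw 1) _ (hG'm w' hw' 1)
      fin_cases q₁ <;> fin_cases q₂
      · exact fst_ext e w w' (d0.2.2.1 x0 x1 y2) (d1.2.2.1 y0 y1 x2) x3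
      · exact snd_ext e w w' (d0.2.2.2.2.1 x0 x1 y2) (d1.2.2.2.2.2 y0 y1 x2) x3
      · exact snd_ext e w w' (d0.2.2.2.2.2 x0 x1 y2) (d1.2.2.2.2.1 y0 y1 x2) x3
      · exact fst_ext e w w' (d0.2.2.2.1 x0 x1 y2) (d1.2.2.2.1 y0 y1 x2) x3)
  have hnR : (0:ℝ) ≤ n := Nat.cast_nonneg _
  have htR : (1:ℝ) ≤ t := by exact_mod_cast ht
  have hrR : (r:ℝ) ≤ 2 * t := by exact_mod_cast hrt.le
  have hr0 : (0:ℝ) ≤ r := Nat.cast_nonneg _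
  have hLR : (L:ℝ) = 2 * t * n + r := by rw [← hLn]; push_cast; ring
  have hab1' : 0 ≤ ab.1 := by
    have : 0 ≤ 2 * t * ab.1 := by linarith [hα 0, hα 1, hα 2, hα 3, hα 4]
    by_contra hneg
    nlinarith
  have hab2' : 0 ≤ ab.2 := by
    have : 0 ≤ 4 * t * ab.2 := by linarith [hβ 0, hβ 1, hβ 2, hβ 3, hβ 4]
    by_contra hneg
    nlinarith
  have hnL : (n:ℝ) * ε ≤ L * ε / 2 := by
    have : 2 * (n:ℝ) ≤ L := by rw [hLR]; nlinarith
    nlinarith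
  have hstor : ((a 0 + a 1 + a 2 + a 3 + a 4 + 2 * r : ℕ) : ℝ) ≤ L * (ab.1 + ε) := by
    push_cast
    have h1 := mul_le_mul_of_nonneg_left hab1 hnR
    have h2 : (n:ℝ) * (2 * t * ab.1) ≤ L * ab.1 := by
      rw [hLR]; nlinarith [mul_nonneg hr0 hab1']
    linarith [ha 0, ha 1, ha 2, ha 3, ha 4]
  have hbeta : ((b 0 + b 1 + b 3 + 2 * r + (b 0 + b 2 + b 4 + 2 * r) : ℝ)) / 2 ≤
      L * (ab.2 + ε) := by
    have h1 := mul_le_mul_of_nonneg_left hab2 hnR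
    have h2 : (n:ℝ) * (2 * t * ab.2) ≤ L * ab.2 := by
      rw [hLR]; nlinarith [mul_nonneg hr0 hab2']
    linarith [hb 0, hb 1, hb 2, hb 3, hb 4]
  have hbR : ∀ m, betaRate C m ≤ L * (ab.2 + ε) := by
    intro m
    rw [hCb]
    refine le_trans (le_of_eq ?_) hbeta
    simp [xi, yi]
  refine ⟨C, hCP, ?_, ?_, ?_, hbR 0, hbR 1⟩
  · refine hCe.trans ?_
    have hsub : G'ᶜ ⊆ Finset.univ.filter (fun w : Msg L × Msg L => blkF e 0 w ∉ G) ∪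
        Finset.univ.filter (fun w : Msg L × Msg L => blkF e 1 w ∉ G) := by
      intro w hw
      simp only [G', Finset.mem_compl, Finset.mem_filter, Finset.mem_univ, true_and,
        Finset.mem_union] at hw ⊢
      exact not_and_or.1 hw
    have hcard : (G'ᶜ.card : ℝ) ≤ 2 * (Gᶜ.card * (((2:ℝ) ^ (2 * t)) ^ n * 2 ^ (2 * r))) := by
      have h1 : (G'ᶜ.card : ℝ) ≤
          ((Finset.univ.filter (fun w : Msg L × Msg L => blkF e 0 w ∉ G)).card : ℝ) +
          ((Finset.univ.filter (fun w : Msg L × Msg L => blkF e 1 w ∉ G)).card : ℝ) := by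
        exact_mod_cast (Finset.card_le_card hsub).trans (Finset.card_union_le _ _)
      have h2 := card_bad e G 0
      have h3 := card_bad e G 1
      linarith
    rw [← div_eq_mul_inv, div_le_iff₀ (by positivity)]
    have hpos : (0:ℝ) ≤ ((2:ℝ) ^ (2 * t)) ^ n * 2 ^ (2 * r) := by positivity
    have h4 := mul_le_mul_of_nonneg_right hG hpos
    have h5 : ((2:ℝ) ^ (2 * t)) ^ n * (((2:ℝ) ^ (2 * t)) ^ n * 2 ^ (2 * r)) = 2 ^ (2 * L) := by
      rw [← hLn, ← pow_mul, ← pow_add, ← pow_add]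
      congr 1; ring
    calc (G'ᶜ.card : ℝ) ≤ 2 * (ε / 2 * ((2:ℝ) ^ (2 * t)) ^ n * (((2:ℝ) ^ (2 * t)) ^ n * 2 ^ (2 * r))) :=
          hcard.trans (by linarith)
      _ = ε * (((2:ℝ) ^ (2 * t)) ^ n * (((2:ℝ) ^ (2 * t)) ^ n * 2 ^ (2 * r))) := by ring
      _ = ε * 2 ^ (2 * L) := by rw [h5]
  · rw [hCs]; exact hstor
  · rw [hCs]; exact hstor


end PIR
end

section
/- Every pair (ᾱ, β̄) in the achievable storage-retrieval rate region R of the (2,2) PIR problem satisfies β̄ ≥ 3/4. -/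
open scoped BigOperators

namespace PIR

variable {L : ℕ} {Q : Type} [Fintype Q] [DecidableEq Q]

/-- Answer of database `n` to query `q`. -/
def answ (C : CodeBase L Q) (n : Fin 2) (q : Q) (w : Msg L × Msg L) : Fin (C.blen n q) → ZMod 2 :=
  C.ans n q (C.phi n w)

/-- Set of the answers possible when the first message is `a`. -/
def img (C : CodeBase L Q) (n : Fin 2) (q : Q) (a : Msg L) :
    Finset (Fin (C.blen n q) → ZMod 2) :=
  Finset.univ.image (fun b : Msg L => answ C n q (a, b))

/-- Log-cardinality of the answer set. -/
noncomputable def lg (C : CodeBase L Q) (n : Fin 2) (q : Q) (a : Msg L) : ℝ :=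
  Real.log ((img C n q a).card : ℝ)

lemma img_pos (C : CodeBase L Q) (n : Fin 2) (q : Q) (a : Msg L) :
    (0:ℝ) < (img C n q a).card := by
  have : (img C n q a).Nonempty := Finset.univ_nonempty.image _
  exact_mod_cast this.card_pos

lemma card_vec (m : ℕ) : Fintype.card (Fin m → ZMod 2) = 2 ^ m := by
  simp [ZMod.card]

lemma lemA (C : CodeBase L Q) (hz : IsZeroError C) (qq : Q × Q) (hq : C.P 1 qq ≠ 0) (a : Msg L) :
    L * Real.log 2 ≤ lg C 0 qq.1 a + lg C 1 qq.2 a := by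
  have h1 : (Finset.univ : Finset (Msg L)).card ≤
      ((img C 0 qq.1 a) ×ˢ (img C 1 qq.2 a)).card := by
    apply Finset.card_le_card_of_injOn
      (fun b : Msg L => (answ C 0 qq.1 (a, b), answ C 1 qq.2 (a, b)))
    · intro b _
      simp only [Finset.coe_product, Set.mem_prod, Finset.mem_coe, img]
      exact ⟨Finset.mem_image_of_mem _ (Finset.mem_univ _),
        Finset.mem_image_of_mem _ (Finset.mem_univ _)⟩
    · intro b _ c _ hbc
      have hb := hz 1 (a, b) qq hq
      have hc := hz 1 (a, c) qq hq
      simp only [Prod.mk.injEq] at hbc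
      simp only [retrieved, target] at hb hc
      obtain ⟨e1, e2⟩ := hbc
      unfold answ at e1 e2
      rw [e1, e2, hc] at hb
      simpa using hb.symm
  rw [Finset.card_product, Finset.card_univ, card_vec] at h1
  have h2 : ((2:ℝ)^L) ≤ (img C 0 qq.1 a).card * (img C 1 qq.2 a).card := by exact_mod_cast h1
  have h3 := Real.log_le_log (by positivity) h2
  rwa [Real.log_pow, Real.log_mul (img_pos ..).ne' (img_pos ..).ne'] at h3

lemma lemB0 (C : CodeBase L Q) (hz : IsZeroError C) (qq : Q × Q) (hq : C.P 0 qq ≠ 0)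
    (c : Msg L → ℕ)
    (hc : ∀ a, c a ≤ (img C 0 qq.1 a).card ∨ c a ≤ (img C 1 qq.2 a).card) :
    ∑ a, c a ≤ 2 ^ (C.blen 0 qq.1 + C.blen 1 qq.2) := by
  classical
  let J : Msg L → Finset ((Fin (C.blen 0 qq.1) → ZMod 2) × (Fin (C.blen 1 qq.2) → ZMod 2)) :=
    fun a => Finset.univ.image (fun b : Msg L => (answ C 0 qq.1 (a, b), answ C 1 qq.2 (a, b)))
  have hJ : ∀ a, c a ≤ (J a).card := by
    intro a
    rcases hc a with h | h
    · refine h.trans ?_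
      have : img C 0 qq.1 a = (J a).image Prod.fst := by
        simp only [J, img, Finset.image_image]; rfl
      rw [this]; exact Finset.card_image_le
    · refine h.trans ?_
      have : img C 1 qq.2 a = (J a).image Prod.snd := by
        simp only [J, img, Finset.image_image]; rfl
      rw [this]; exact Finset.card_image_le
  have hd : Set.PairwiseDisjoint (↑(Finset.univ : Finset (Msg L))) J := by
    intro a _ a' _ hne
    simp only [Function.onFun]
    rw [Finset.disjoint_left]
    intro x hx hx'
    simp only [J, Finset.mem_image, Finset.mem_univ, true_and] at hx hx'
    obtain ⟨b, rfl⟩ := hx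
    obtain ⟨b', hb'⟩ := hx'
    apply hne
    have h1 := hz 0 (a, b) qq hq
    have h2 := hz 0 (a', b') qq hq
    simp only [Prod.mk.injEq] at hb'
    simp only [retrieved, target] at h1 h2
    obtain ⟨e1, e2⟩ := hb'
    unfold answ at e1 e2
    rw [e1, e2, h1] at h2
    simpa using h2
  calc ∑ a, c a ≤ ∑ a, (J a).card := Finset.sum_le_sum fun a _ => hJ a
    _ = (Finset.univ.biUnion J).card := (Finset.card_biUnion hd).symm
    _ ≤ Fintype.card _ := Finset.card_le_univ _
    _ = _ := by rw [Fintype.card_prod, card_vec, card_vec, pow_add]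

/-- Average of the log-cardinality over the first message. -/
noncomputable def av (C : CodeBase L Q) (n : Fin 2) (q : Q) : ℝ :=
  ∑ a : Msg L, ((2:ℝ)^L)⁻¹ * lg C n q a

lemma sum_w (L : ℕ) : ∑ _a : Msg L, ((2:ℝ)^L)⁻¹ = 1 := by
  rw [Finset.sum_const, Finset.card_univ, card_vec, nsmul_eq_mul]
  push_cast
  exact mul_inv_cancel₀ (by positivity)

lemma lemA' (C : CodeBase L Q) (hz : IsZeroError C) (qq : Q × Q) (hq : C.P 1 qq ≠ 0) :
    L * Real.log 2 ≤ av C 0 qq.1 + av C 1 qq.2 := by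
  unfold av
  rw [← Finset.sum_add_distrib]
  calc L * Real.log 2 = ∑ _a : Msg L, ((2:ℝ)^L)⁻¹ * (L * Real.log 2) := by
        rw [← Finset.sum_mul, sum_w, one_mul]
    _ ≤ _ := by
        refine Finset.sum_le_sum fun a _ => ?_
        rw [← mul_add]
        exact mul_le_mul_of_nonneg_left (lemA C hz qq hq a) (by positivity)

lemma lemB (C : CodeBase L Q) (hz : IsZeroError C) (qq : Q × Q) (hq : C.P 0 qq ≠ 0) :
    L * Real.log 2 + (av C 0 qq.1 + av C 1 qq.2) / 2 ≤
      ((C.blen 0 qq.1 : ℝ) + C.blen 1 qq.2) * Real.log 2 := by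
  let c : Msg L → ℕ := fun a => max (img C 0 qq.1 a).card (img C 1 qq.2 a).card
  have h0 := lemB0 C hz qq hq c (fun a => le_max_iff.1 le_rfl)
  have h0' : ∑ a, (c a : ℝ) ≤ 2 ^ (C.blen 0 qq.1 + C.blen 1 qq.2) := by exact_mod_cast h0
  have hcpos : ∀ a, (0:ℝ) < c a := fun a =>
    (img_pos C 0 qq.1 a).trans_le (by exact_mod_cast le_max_left _ _)
  have hl : ∀ a, (lg C 0 qq.1 a + lg C 1 qq.2 a) / 2 ≤ Real.log (c a) := by
    intro a
    have h1 : lg C 0 qq.1 a ≤ Real.log (c a) :=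
      Real.log_le_log (img_pos ..) (by exact_mod_cast le_max_left _ _)
    have h2 : lg C 1 qq.2 a ≤ Real.log (c a) :=
      Real.log_le_log (img_pos ..) (by exact_mod_cast le_max_right _ _)
    linarith
  have hJ := strictConcaveOn_log_Ioi.concaveOn.le_map_sum (t := Finset.univ)
    (w := fun _ : Msg L => ((2:ℝ)^L)⁻¹) (p := fun a => (c a : ℝ))
    (fun _ _ => by positivity) (sum_w L) (fun a _ => hcpos a)
  simp only [smul_eq_mul] at hJ
  rw [← Finset.mul_sum (f := fun a => (c a : ℝ))] at hJ
  have hs : 0 < ∑ a, (c a : ℝ) := Finset.sum_pos (fun a _ => hcpos a) Finset.univ_nonempty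
  rw [Real.log_mul (by positivity) hs.ne', Real.log_inv, Real.log_pow] at hJ
  have h5 := Real.log_le_log hs h0'
  rw [Real.log_pow] at h5
  have h6 : (av C 0 qq.1 + av C 1 qq.2) / 2 ≤ ∑ a, ((2:ℝ)^L)⁻¹ * Real.log (c a) := by
    unfold av
    rw [← Finset.sum_add_distrib, Finset.sum_div]
    refine Finset.sum_le_sum fun a _ => ?_
    have := mul_le_mul_of_nonneg_left (hl a) (by positivity : (0:ℝ) ≤ ((2:ℝ)^L)⁻¹)
    linarith
  push_cast at h5
  linarith

lemma marg (C : CodeBase L Q) (n : Fin 2) (g : Q → ℝ) :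
    ∑ qq : Q × Q, C.P 0 qq * g (if n = 0 then qq.1 else qq.2) =
    ∑ qq : Q × Q, C.P 1 qq * g (if n = 0 then qq.1 else qq.2) := by
  have key : ∀ k, ∑ qq : Q × Q, C.P k qq * g (if n = 0 then qq.1 else qq.2) =
      ∑ q, (∑ qq : Q × Q, if (if n = 0 then qq.1 else qq.2) = q then C.P k qq else 0) * g q := by
    intro k
    simp_rw [Finset.sum_mul]
    rw [Finset.sum_comm]
    refine Finset.sum_congr rfl fun qq _ => ?_
    simp only [ite_mul, zero_mul]
    rw [Finset.sum_ite_eq]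
    simp
  rw [key, key]
  refine Finset.sum_congr rfl fun q _ => ?_
  congr 1
  refine mul_right_cancel₀ ?_ (C.privacy n q (C.phi n 0))
  have : (Finset.univ.filter (fun w : Msg L × Msg L => C.phi n w = C.phi n 0)).Nonempty :=
    ⟨0, by simp⟩
  exact_mod_cast this.card_pos.ne'

lemma avg_le (C : CodeBase L Q) (k : Fin 2) (f g : Q × Q → ℝ)
    (h : ∀ qq, C.P k qq ≠ 0 → f qq ≤ g qq) :
    ∑ qq, C.P k qq * f qq ≤ ∑ qq, C.P k qq * g qq := by
  refine Finset.sum_le_sum fun qq _ => ?_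
  by_cases hq : C.P k qq = 0
  · simp [hq]
  · exact mul_le_mul_of_nonneg_left (h qq hq) (C.P_nonneg k qq)

lemma converse (C : CodeBase L Q) (hz : IsZeroError C) :
    3 / 2 * (L:ℝ) ≤ betaRate C 0 + betaRate C 1 := by
  have hA := avg_le C 1 (fun _ => L * Real.log 2) _ (fun qq hq => lemA' C hz qq hq)
  have hB := avg_le C 0 _ _ (fun qq hq => lemB C hz qq hq)
  have m0 := marg C 0 (av C 0)
  have m1 := marg C 1 (av C 1)
  simp only [if_true, if_neg (one_ne_zero : (1 : Fin 2) ≠ 0)] at m0 m1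
  rw [← Finset.sum_mul, C.P_sum, one_mul] at hA
  simp only [mul_add, Finset.sum_add_distrib] at hA
  have e1 : ∑ qq, C.P 0 qq * (L * Real.log 2 + (av C 0 qq.1 + av C 1 qq.2) / 2) =
      L * Real.log 2 + (∑ qq, C.P 0 qq * av C 0 qq.1 + ∑ qq, C.P 0 qq * av C 1 qq.2) / 2 := by
    rw [← Finset.sum_add_distrib, Finset.sum_div]
    conv_rhs => rw [← one_mul (L * Real.log 2), ← C.P_sum 0, Finset.sum_mul]
    rw [← Finset.sum_add_distrib]
    exact Finset.sum_congr rfl fun qq _ => by ring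
  have e2 : ∑ qq, C.P 0 qq * (((C.blen 0 qq.1 : ℝ) + C.blen 1 qq.2) * Real.log 2) =
      (betaRate C 0 + betaRate C 1) * Real.log 2 := by
    unfold betaRate
    simp only [if_true, if_neg (one_ne_zero : (1 : Fin 2) ≠ 0)]
    rw [← Finset.sum_add_distrib, Finset.sum_mul]
    exact Finset.sum_congr rfl fun qq _ => by ring
  rw [e1, e2, m0, m1] at hB
  have hlog : 0 < Real.log 2 := Real.log_pos one_lt_two
  refine le_of_mul_le_mul_right ?_ hlog
  linarith

/-- Every pair `(ᾱ, β̄)` in the achievable storage-retrieval rate region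
of the (2,2) PIR problem satisfies `β̄ ≥ 3/4`. -/
theorem statement4 (ab : ℝ × ℝ) (h : ab ∈ Region) : 3 / 4 ≤ ab.2 := by
  refine le_of_forall_pos_le_add fun ε hε => ?_
  obtain ⟨L₀, hL⟩ := h ε hε
  obtain ⟨C, hz, -, hb⟩ := hL (max L₀ 1) (le_max_left _ _)
  have h1 := converse C.base hz
  have h2 : (0:ℝ) < ((max L₀ 1 : ℕ) : ℝ) := by
    exact_mod_cast lt_of_lt_of_le one_pos (le_max_right _ _)
  refine le_of_mul_le_mul_left ?_ h2
  linarith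

end PIR
end

section
/- Every pair (ᾱ, β̄) in the achievable storage-retrieval rate region R of the (2,2) PIR problem satisfies ᾱ + β̄ ≥ 2. -/
open scoped BigOperators

namespace PIR

variable {L : ℕ} {Q : Type} [Fintype Q] [DecidableEq Q]

/-- A query seen by database `n` when message 1 is desired is also seen when message 2 is. -/
theorem exists_query (C : CodeBase L Q) (n : Fin 2) (qq : Q × Q) (h : C.P 0 qq ≠ 0) :
    ∃ qq' : Q × Q, C.P 1 qq' ≠ 0 ∧
      (if n = 0 then qq'.1 else qq'.2) = (if n = 0 then qq.1 else qq.2) := by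
  by_contra hcon
  push Not at hcon
  have hp := C.privacy n (if n = 0 then qq.1 else qq.2) (C.phi n (0, 0))
  have hc : ((Finset.univ.filter
      (fun w : Msg L × Msg L => C.phi n w = C.phi n (0, 0))).card : ℝ) ≠ 0 := by
    have : 0 < (Finset.univ.filter
        (fun w : Msg L × Msg L => C.phi n w = C.phi n (0, 0))).card :=
      Finset.card_pos.mpr ⟨(0, 0), by simp⟩
    exact_mod_cast this.ne'
  have hm := mul_right_cancel₀ hc hp
  have h1 : (∑ qq' : Q × Q, if (if n = 0 then qq'.1 else qq'.2) =
      (if n = 0 then qq.1 else qq.2) then C.P 1 qq' else 0) = 0 := by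
    refine Finset.sum_eq_zero fun x _ => ?_
    refine ite_eq_right_iff.mpr fun hx => ?_
    by_contra hne
    exact hcon x hne hx
  rw [h1] at hm
  have h2 := (Finset.sum_eq_zero_iff_of_nonneg (fun x _ => by
    split_ifs <;> first | exact C.P_nonneg 0 x | exact le_rfl)).mp hm qq (Finset.mem_univ _)
  rw [if_pos rfl] at h2
  exact h h2

/-- An injection of message pairs into a pair of binary words bounds the lengths. -/
theorem length_bound {a b : ℕ}
    (f : Msg L × Msg L → (Fin a → ZMod 2) × (Fin b → ZMod 2))
    (hf : Function.Injective f) : 2 * L ≤ a + b := by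
  have h := Fintype.card_le_of_injective f hf
  simp only [Fintype.card_prod, Fintype.card_fun, ZMod.card, Fintype.card_fin, ← pow_add] at h
  have := (Nat.pow_le_pow_iff_right (by norm_num : 1 < 2)).mp h
  omega

/-- The content of database 1 and any answer of database 2 determine both messages. -/
theorem bound_one (C : CodeBase L Q) (hz : IsZeroError C) (qq : Q × Q) (h : C.P 0 qq ≠ 0) :
    2 * L ≤ C.stor 0 + C.blen 1 qq.2 := by
  obtain ⟨⟨p1, p2⟩, hP, he⟩ := exists_query C 1 qq h
  obtain ⟨q1, q2⟩ := qq
  simp only [one_ne_zero, if_false] at he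
  subst he
  refine length_bound (fun w => (C.phi 0 w, C.ans 1 p2 (C.phi 1 w))) fun w w' hw => ?_
  simp only [Prod.mk.injEq] at hw
  have e1 := hz 0 w _ h
  have d1 := hz 0 w' _ h
  have e2 := hz 1 w _ hP
  have d2 := hz 1 w' _ hP
  simp only [retrieved, target, if_true, one_ne_zero, if_false, hw.1, hw.2] at e1 d1 e2 d2
  exact Prod.ext (e1.symm.trans d1) (e2.symm.trans d2)

/-- The content of database 2 and any answer of database 1 determine both messages. -/
theorem bound_two (C : CodeBase L Q) (hz : IsZeroError C) (qq : Q × Q) (h : C.P 0 qq ≠ 0) :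
    2 * L ≤ C.stor 1 + C.blen 0 qq.1 := by
  obtain ⟨⟨p1, p2⟩, hP, he⟩ := exists_query C 0 qq h
  obtain ⟨q1, q2⟩ := qq
  simp only [if_true] at he
  subst he
  refine length_bound (fun w => (C.phi 1 w, C.ans 0 p1 (C.phi 0 w))) fun w w' hw => ?_
  simp only [Prod.mk.injEq] at hw
  have e1 := hz 0 w _ h
  have d1 := hz 0 w' _ h
  have e2 := hz 1 w _ hP
  have d2 := hz 1 w' _ hP
  simp only [retrieved, target, if_true, one_ne_zero, if_false, hw.1, hw.2] at e1 d1 e2 d2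
  exact Prod.ext (e1.symm.trans d1) (e2.symm.trans d2)

/-- The bound for a single code. -/
theorem code_bound (C : CodeBase L Q) (hz : IsZeroError C) :
    4 * (L : ℝ) ≤ ((C.stor 0 + C.stor 1 : ℕ) : ℝ) + (betaRate C 0 + betaRate C 1) := by
  have key : ∑ qq : Q × Q, C.P 0 qq * (4 * (L : ℝ)) ≤
      ∑ qq : Q × Q, C.P 0 qq * (((C.stor 0 + C.stor 1 : ℕ) : ℝ) +
        ((C.blen 0 qq.1 : ℝ) + (C.blen 1 qq.2 : ℝ))) := by
    refine Finset.sum_le_sum fun qq _ => ?_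
    by_cases h : C.P 0 qq = 0
    · simp [h]
    · refine mul_le_mul_of_nonneg_left ?_ (C.P_nonneg 0 qq)
      have b1 := bound_one C hz qq h
      have b2 := bound_two C hz qq h
      have : 4 * L ≤ (C.stor 0 + C.stor 1) + (C.blen 0 qq.1 + C.blen 1 qq.2) := by omega
      exact_mod_cast this
  simp only [mul_add, Finset.sum_add_distrib, ← Finset.sum_mul, C.P_sum, one_mul] at key
  simpa [betaRate] using key

/-- Every pair `(ᾱ, β̄)` in the achievable storage-retrieval rate region
of the (2,2) PIR problem satisfies `ᾱ + β̄ ≥ 2`. -/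
theorem statement5 (ab : ℝ × ℝ) (h : ab ∈ Region) : 2 ≤ ab.1 + ab.2 := by
  by_contra hlt
  push Not at hlt
  obtain ⟨L₀, hL⟩ := h ((2 - (ab.1 + ab.2)) / 4) (by linarith)
  obtain ⟨C, hz, h1, h2⟩ := hL (L₀ + 1) (by omega)
  have hb := code_bound C.base hz
  have hpos : (0 : ℝ) < ((L₀ + 1 : ℕ) : ℝ) := by positivity
  nlinarith [mul_pos hpos (sub_pos.mpr hlt)]

end PIR
end
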